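/- arXiv:1812.11213 — 9 statements merged into one kernel-verified Lean document; each statement's English description precedes it below -/
import Mathlib

section
/- Let L_0 ⊆ L_1 and M_0 ⊆ M_1 be subspaces of V. Then (L_1 ∩ M_0^⊥)^⊥ ∩ (L_0^⊥ ∩ M_1) = L_1^⊥ ∩ M_1 + L_0^⊥ ∩ M_0, and (L_1 ∩ M_0^⊥) ∩ (L_0^⊥ ∩ M_1)^⊥ = L_1 ∩ M_1^⊥ + L_0 ∩ M_0^⊥. -/
open Module

/-- The orthogonal complement of a subspace `L` with respect to a bilinear form `b`:
`L^⊥ = {v ∈ V | b(v,w) = 0 for all w ∈ L}`. -/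
def perp {K V : Type*} [Field K] [AddCommGroup V] [Module K V]
    (B : V →ₗ[K] V →ₗ[K] K) (L : Submodule K V) : Submodule K V where
  carrier := {v | ∀ w ∈ L, B v w = 0}
  add_mem' := by
    intro a b ha hb w hw
    simp [map_add, LinearMap.add_apply, ha w hw, hb w hw]
  zero_mem' := by
    intro w hw
    simp
  smul_mem' := by
    intro c a ha w hw
    simp [map_smul, LinearMap.smul_apply, ha w hw]

/-! For a pairing `B` of `V` with `W` and a finite-dimensional `M ≤ V`, the functionals on `L ≤ W`
induced by `M` are exactly those vanishing on their common kernel `L ∩ M^⊥`; hence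
`(L ∩ M^⊥)^⊥ = L^⊥ + M`. After this substitution the first identity is two applications of the
modular law, and the second is the first for the flipped pairing. -/

theorem sup_inf_inf_eq_inf_sup_inf {α : Type*} [Lattice α] [IsModularLattice α]
    {a₁ a₂ b₁ b₂ : α} (ha : a₁ ≤ a₂) (hb : b₁ ≤ b₂) :
    (a₁ ⊔ b₁) ⊓ (a₂ ⊓ b₂) = a₁ ⊓ b₂ ⊔ a₂ ⊓ b₁ :=
  calc (a₁ ⊔ b₁) ⊓ (a₂ ⊓ b₂)
      = (a₁ ⊔ b₁) ⊓ a₂ ⊓ b₂ := (inf_assoc ..).symm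
    _ = (a₁ ⊔ b₁ ⊓ a₂) ⊓ b₂ := by rw [sup_inf_assoc_of_le b₁ ha]
    _ = (b₁ ⊓ a₂ ⊔ a₁) ⊓ b₂ := by rw [sup_comm]
    _ = b₁ ⊓ a₂ ⊔ a₁ ⊓ b₂ := sup_inf_assoc_of_le a₁ (inf_le_left.trans hb)
    _ = a₁ ⊓ b₂ ⊔ a₂ ⊓ b₁ := by rw [sup_comm, inf_comm b₁]

section Pairing

variable {K V W : Type*} [Field K] [AddCommGroup V] [Module K V] [AddCommGroup W] [Module K W]

theorem orthogonalBilin_flip_inf_orthogonalBilin (B : V →ₗ[K] W →ₗ[K] K) (L : Submodule K W)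
    (M : Submodule K V) [FiniteDimensional K M] :
    (L ⊓ M.orthogonalBilin B).orthogonalBilin B.flip = L.orthogonalBilin B.flip ⊔ M := by
  let restrict : V →ₗ[K] Module.Dual K L := L.subtype.dualMap ∘ₗ B
  have ker_restrict : restrict.ker = L.orthogonalBilin B.flip := by
    ext v
    simp [restrict, LinearMap.ext_iff]
  have comap_annihilator :
      (M.map restrict).dualCoannihilator.dualAnnihilator.comap restrict =
        (L ⊓ M.orthogonalBilin B).orthogonalBilin B.flip := by
    ext v
    simp [restrict, Submodule.mem_dualAnnihilator, Submodule.mem_dualCoannihilator]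
  rw [← comap_annihilator, Subspace.dualCoannihilator_dualAnnihilator_eq,
    Submodule.comap_map_eq, ker_restrict, sup_comm]

theorem orthogonalBilin_flip_inf_inf_eq_sup (B : V →ₗ[K] W →ₗ[K] K) {L₀ L₁ : Submodule K W}
    {M₀ M₁ : Submodule K V} [FiniteDimensional K M₀] (hL : L₀ ≤ L₁) (hM : M₀ ≤ M₁) :
    (L₁ ⊓ M₀.orthogonalBilin B).orthogonalBilin B.flip ⊓ (L₀.orthogonalBilin B.flip ⊓ M₁) =
      L₁.orthogonalBilin B.flip ⊓ M₁ ⊔ L₀.orthogonalBilin B.flip ⊓ M₀ := by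
  rw [orthogonalBilin_flip_inf_orthogonalBilin]
  exact sup_inf_inf_eq_inf_sup_inf (Submodule.orthogonalBilin_le hL) hM

theorem statement0_general (B : V →ₗ[K] W →ₗ[K] K) {L₀ L₁ : Submodule K W}
    {M₀ M₁ : Submodule K V} [FiniteDimensional K L₀] [FiniteDimensional K M₀]
    (hL : L₀ ≤ L₁) (hM : M₀ ≤ M₁) :
    (L₁ ⊓ M₀.orthogonalBilin B).orthogonalBilin B.flip ⊓ (L₀.orthogonalBilin B.flip ⊓ M₁) =
        L₁.orthogonalBilin B.flip ⊓ M₁ ⊔ L₀.orthogonalBilin B.flip ⊓ M₀ ∧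
      (L₁ ⊓ M₀.orthogonalBilin B) ⊓ (L₀.orthogonalBilin B.flip ⊓ M₁).orthogonalBilin B =
        L₁ ⊓ M₁.orthogonalBilin B ⊔ L₀ ⊓ M₀.orthogonalBilin B := by
  refine ⟨orthogonalBilin_flip_inf_inf_eq_sup B hL hM, ?_⟩
  simpa only [LinearMap.flip_flip, inf_comm] using
    orthogonalBilin_flip_inf_inf_eq_sup B.flip hM hL

end Pairing

theorem perp_eq_orthogonalBilin_flip {K V : Type*} [Field K] [AddCommGroup V] [Module K V]
    (B : V →ₗ[K] V →ₗ[K] K) (L : Submodule K V) : perp B L = L.orthogonalBilin B.flip :=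
  rfl

/-- For subspaces `L₀ ⊆ L₁` and `M₀ ⊆ M₁` of `V`,
`(L₁ ∩ M₀^⊥)^⊥ ∩ (L₀^⊥ ∩ M₁) = L₁^⊥ ∩ M₁ + L₀^⊥ ∩ M₀` and
`(L₁ ∩ M₀^⊥) ∩ (L₀^⊥ ∩ M₁)^⊥ = L₁ ∩ M₁^⊥ + L₀ ∩ M₀^⊥`. -/
theorem statement0 {K V : Type*} [Field K] [AddCommGroup V] [Module K V]
    [FiniteDimensional K V] [CharP K 2] [PerfectField K]
    (B : V →ₗ[K] V →ₗ[K] K)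
    (hsymm : ∀ u v : V, B u v = B v u)
    (hnd : ∀ v : V, (∀ w : V, B v w = 0) → v = 0)
    (L0 L1 M0 M1 : Submodule K V) (hL : L0 ≤ L1) (hM : M0 ≤ M1) :
    perp B (L1 ⊓ perp B M0) ⊓ (perp B L0 ⊓ M1)
      = perp B L1 ⊓ M1 ⊔ perp B L0 ⊓ M0 ∧
    (L1 ⊓ perp B M0) ⊓ perp B (perp B L0 ⊓ M1)
      = L1 ⊓ perp B M1 ⊔ L0 ⊓ perp B M0 := by
  have flip_eq : B.flip = B := LinearMap.ext₂ fun u v => hsymm v u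
  simpa only [perp_eq_orthogonalBilin_flip, flip_eq] using statement0_general B hL hM
end

section
/- For every flag 𝓕 of V and all integers q, r ≥ 1, the set {u ∈ V_q ∩ V_{r−1}^⊥ | b(u,v) = 0 for all v ∈ V_r ∩ V_{q−1}^⊥} equals V_q ∩ V_r^⊥ + V_{q−1} ∩ V_{r−1}^⊥; that is, b induces a nondegenerate bilinear pairing Φ_qr × Φ_rq → K. -/
/-!
Regard `B` as a linear map `V → Dual K V`. Then `V_r^⊥` is the preimage of the annihilator of `V_r`,
and `V_{q-1}^⊥`, read as the right complement `perp B.flip`, is the common kernel of the functionals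
in the image of `V_{q-1}`. Annihilators turn intersections into sums, and a finite-dimensional space
of functionals is the annihilator of its common kernel, so `(V_r ∩ V_{q-1}^⊥)^⊥ = V_r^⊥ + V_{q-1}`.
Since `V_{q-1} ⊆ V_q` and `V_r^⊥ ⊆ V_{r-1}^⊥`, two applications of the modular law compute the
intersection of this sum with `V_q ∩ V_{r-1}^⊥`.
-/

open Module

theorem inf_inf_sup_eq_of_le {α : Type*} [Lattice α] [IsModularLattice α] {a a' c c' : α}
    (ha : a' ≤ a) (hc : c ≤ c') : (a ⊓ c') ⊓ (c ⊔ a') = a ⊓ c ⊔ a' ⊓ c' :=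
  calc (a ⊓ c') ⊓ (c ⊔ a')
    _ = a ⊓ ((c ⊔ a') ⊓ c') := by rw [inf_assoc, inf_comm c']
    _ = a ⊓ (c ⊔ a' ⊓ c') := by rw [sup_inf_assoc_of_le a' hc]
    _ = a ⊓ c ⊔ a' ⊓ c' := (inf_sup_assoc_of_le c (inf_le_left.trans ha)).symm

theorem comap_map_sup {R M N : Type*} [Ring R] [AddCommGroup M] [Module R M] [AddCommGroup N]
    [Module R N] (f : M →ₗ[R] N) (p : Submodule R M) (q : Submodule R N) :
    (p.map f ⊔ q).comap f = p ⊔ q.comap f := by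
  refine le_antisymm ?_ (sup_le (Submodule.map_le_iff_le_comap.1 le_sup_left)
    (Submodule.comap_mono le_sup_right))
  calc (p.map f ⊔ q).comap f
    _ ≤ ((p ⊔ q.comap f).map f ⊔ q).comap f :=
      Submodule.comap_mono (sup_le_sup_right (Submodule.map_mono le_sup_left) q)
    _ = p ⊔ q.comap f := Submodule.comap_map_sup_of_comap_le le_sup_right

section Perp

variable {K V : Type*} [Field K] [AddCommGroup V] [Module K V] (B : V →ₗ[K] V →ₗ[K] K)

theorem perp_eq_comap_dualAnnihilator (L : Submodule K V) :
    perp B L = L.dualAnnihilator.comap B := by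
  ext v
  exact (Submodule.mem_dualAnnihilator (B v)).symm

theorem perp_flip_eq_dualCoannihilator_map (L : Submodule K V) :
    perp B.flip L = (L.map B).dualCoannihilator := by
  ext v
  simp only [Submodule.mem_dualCoannihilator, Submodule.mem_map, forall_exists_index, and_imp,
    forall_apply_eq_imp_iff₂]
  rfl

theorem perp_antitone : Antitone (perp B) :=
  fun _ _ hLM _ hv w hw => hv w (hLM hw)

theorem perp_inf_perp_flip (L M : Submodule K V) [FiniteDimensional K M] :
    perp B (L ⊓ perp B.flip M) = perp B L ⊔ M := by
  rw [perp_eq_comap_dualAnnihilator, perp_flip_eq_dualCoannihilator_map,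
    Subspace.dualAnnihilator_inf_eq, Subspace.dualCoannihilator_dualAnnihilator_eq, sup_comm,
    comap_map_sup, sup_comm, ← perp_eq_comap_dualAnnihilator]

theorem statement3_general {L L' M M' : Submodule K V} [FiniteDimensional K L']
    (hL : L' ≤ L) (hM : M' ≤ M) :
    (L ⊓ perp B M') ⊓ perp B (M ⊓ perp B.flip L') = L ⊓ perp B M ⊔ L' ⊓ perp B M' := by
  rw [perp_inf_perp_flip]
  exact inf_inf_sup_eq_of_le hL (perp_antitone B hM)

end Perp

/-- for every flag of V and q, r ≥ 1,
{u ∈ V_q ∩ V_{r−1}^⊥ | b(u,v) = 0 for all v ∈ V_r ∩ V_{q−1}^⊥}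
  = V_q ∩ V_r^⊥ + V_{q−1} ∩ V_{r−1}^⊥,
i.e. b induces a nondegenerate pairing Φ_qr × Φ_rq → K. -/
theorem statement3 {K V : Type*} [Field K] [AddCommGroup V] [Module K V]
    [FiniteDimensional K V] [CharP K 2] [PerfectField K]
    (B : V →ₗ[K] V →ₗ[K] K)
    (hsymm : ∀ u v : V, B u v = B v u)
    (hnd : ∀ v : V, (∀ w : V, B v w = 0) → v = 0)
    (Vf : ℕ → Submodule K V) (hbot : Vf 0 = ⊥) (hmono : Monotone Vf)
    (htop : ∃ N, ∀ q, N ≤ q → Vf q = ⊤)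
    (q r : ℕ) (hq : 1 ≤ q) (hr : 1 ≤ r) :
    (Vf q ⊓ perp B (Vf (r - 1))) ⊓ perp B (Vf r ⊓ perp B (Vf (q - 1)))
      = Vf q ⊓ perp B (Vf r) ⊔ Vf (q - 1) ⊓ perp B (Vf (r - 1)) := by
  have hflip : B.flip = B := LinearMap.ext₂ fun u v => hsymm v u
  simpa only [hflip] using
    statement3_general B (hmono (Nat.sub_le q 1)) (hmono (Nat.sub_le r 1))
end

section
/- If b is a non-alternating symmetric bilinear form on V, then V^0 = {v ∈ V | b(v,v) = 0} is a K-linear subspace of V of codimension 1 (a hyperplane). -/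
/-!
In characteristic 2 the cross terms of `B (u + v) (u + v)` cancel when `B` is symmetric, so the
diagonal `v ↦ B v v` is additive; as `B (c • v) (c • v) = c ^ 2 * B v v`, it is semilinear over the
Frobenius. Its zero set is therefore a subspace, and since the Frobenius of a perfect field is
surjective, the quotient by the kernel of a nonzero semilinear form over it is one-dimensional,
exactly as for a linear form.
-/

open Module

section Diagonal

variable {R M : Type*} [CommSemiring R] [CharP R 2] [AddCommMonoid M] [Module R M]

/-- The diagonal `v ↦ B v v` of a symmetric bilinear form `B` in characteristic 2, as a
Frobenius-semilinear form. Its kernel is the set `V^0` of isotropic vectors of `B`. -/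
def symmDiagonal (B : LinearMap.BilinForm R M) (hB : B.IsSymm) : M →ₛₗ[frobenius R 2] R where
  toFun v := B v v
  map_add' u v := by
    calc B (u + v) (u + v) = B u u + B v v + (B u v + B v u) := by
          simp only [map_add, LinearMap.add_apply]; ring
      _ = B u u + B v v := by rw [hB.eq v u, CharTwo.add_self_eq_zero, add_zero]
  map_smul' c v := by
    simp only [map_smul, LinearMap.smul_apply, smul_eq_mul, frobenius_def]; ring

@[simp]
theorem symmDiagonal_apply (B : LinearMap.BilinForm R M) (hB : B.IsSymm) (v : M) :
    symmDiagonal B hB v = B v v :=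
  rfl

end Diagonal

theorem finrank_quotient_ker_eq_one_of_ne_zero {K L V : Type*} [DivisionRing K] [DivisionRing L]
    [AddCommGroup V] [Module K V] {σ : K →+* L} [RingHomSurjective σ] {f : V →ₛₗ[σ] L}
    (hf : f ≠ 0) : finrank K (V ⧸ LinearMap.ker f) = 1 := by
  obtain ⟨v, hv⟩ : ∃ v, f v ≠ 0 := DFunLike.ne_iff.mp hf
  refine finrank_eq_one (Submodule.Quotient.mk v) ?_ fun w ↦ ?_
  · rwa [Ne, Submodule.Quotient.mk_eq_zero, LinearMap.mem_ker]
  · obtain ⟨w, rfl⟩ := Submodule.Quotient.mk_surjective _ w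
    obtain ⟨c, hc⟩ := σ.surjective (f w / f v)
    have hcv : f (c • v) = f w := by rw [map_smulₛₗ, hc, smul_eq_mul, div_mul_cancel₀ _ hv]
    exact ⟨c, (Submodule.Quotient.eq _).mpr (LinearMap.sub_mem_ker_iff.mpr hcv)⟩

theorem statement5_general {K V : Type*} [Field K] [AddCommGroup V] [Module K V]
    [CharP K 2] [PerfectField K] (B : LinearMap.BilinForm K V) (hsymm : B.IsSymm)
    (hna : ∃ v : V, B v v ≠ 0) :
    ∃ H : Submodule K V, (∀ v : V, v ∈ H ↔ B v v = 0) ∧ finrank K (V ⧸ H) = 1 := by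
  have : PerfectRing K 2 := PerfectField.toPerfectRing 2
  have : RingHomSurjective (frobenius K 2) := ⟨surjective_frobenius K 2⟩
  have hne : symmDiagonal B hsymm ≠ 0 :=
    DFunLike.ne_iff.mpr (by simpa only [symmDiagonal_apply, LinearMap.zero_apply] using hna)
  exact ⟨LinearMap.ker (symmDiagonal B hsymm),
    fun v ↦ by rw [LinearMap.mem_ker, symmDiagonal_apply],
    finrank_quotient_ker_eq_one_of_ne_zero hne⟩

/-- if b is a non-alternating symmetric bilinear form on V
(over a perfect field of characteristic 2), then V^0 = {v | b(v,v) = 0}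
is a K-linear subspace of V of codimension 1 (a hyperplane). -/
theorem statement5 {K V : Type*} [Field K] [AddCommGroup V] [Module K V]
    [FiniteDimensional K V] [CharP K 2] [PerfectField K]
    (B : V →ₗ[K] V →ₗ[K] K)
    (hsymm : ∀ u v : V, B u v = B v u)
    (hna : ∃ v : V, B v v ≠ 0) :
    ∃ H : Submodule K V, (∀ v : V, v ∈ H ↔ B v v = 0) ∧
      finrank K ↥H + 1 = finrank K V := by
  obtain ⟨H, hH, hcodim⟩ := statement5_general B ⟨hsymm⟩ hna
  exact ⟨H, hH, by rw [← H.finrank_quotient_add_finrank, hcodim, add_comm]⟩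
end

section
/- For every flag 𝓕 of V and all integers q, r ≥ 1, the invariant n_qr^1 = n_qr − dim Φ_qr^0 can only be equal to 0 or 1; that is, Φ_qr^0 has codimension at most 1 in Φ_qr. -/
open Module

/-- `n_qr`: the dimension of the quotient
`Φ_qr = (V_q ∩ V_{r−1}^⊥)/(V_q ∩ V_r^⊥ + V_{q−1} ∩ V_{r−1}^⊥)`. -/
noncomputable def nqr {K V : Type*} [Field K] [AddCommGroup V] [Module K V]
    (B : V →ₗ[K] V →ₗ[K] K) (Vf : ℕ → Submodule K V) (q r : ℕ) : ℕ :=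
  Module.finrank K
    (↥(Vf q ⊓ perp B (Vf (r - 1))) ⧸
      Submodule.comap (Vf q ⊓ perp B (Vf (r - 1))).subtype
        (Vf q ⊓ perp B (Vf r) ⊔ Vf (q - 1) ⊓ perp B (Vf (r - 1))))

/-- `n_qr^1 = n_qr − dim Φ_qr^0`, where `Φ_qr^0` is the image of
`V_q ∩ V_{r−1}^⊥ ∩ V^0` under the canonical projection onto `Φ_qr`
(`V0` is the subspace of isotropic vectors `{v | b(v,v) = 0}`). -/
noncomputable def nqr1 {K V : Type*} [Field K] [AddCommGroup V] [Module K V]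
    (B : V →ₗ[K] V →ₗ[K] K) (Vf : ℕ → Submodule K V) (V0 : Submodule K V)
    (q r : ℕ) : ℕ :=
  nqr B Vf q r -
    Module.finrank K
      ↥(Submodule.map
        (Submodule.mkQ (Submodule.comap (Vf q ⊓ perp B (Vf (r - 1))).subtype
          (Vf q ⊓ perp B (Vf r) ⊔ Vf (q - 1) ⊓ perp B (Vf (r - 1)))))
        (Submodule.comap (Vf q ⊓ perp B (Vf (r - 1))).subtype V0))

/-!
Over a perfect field of characteristic 2, the map `v ↦ √(b(v, v))` is additive, because the cross
terms of a symmetric form cancel, and `K`-linear, because the inverse Frobenius map turns `c ^ 2`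
back into `c`. So `V^0` is the kernel of a linear functional, and its image in any subquotient of
`V`, in particular in `Φ_qr`, has codimension at most 1.
-/

section RankQuotient

variable {R M : Type*} [Ring R] [AddCommGroup M] [Module R M]

theorem rank_quotient_ker_le_one [StrongRankCondition R] (f : M →ₗ[R] R) :
    Module.rank R (M ⧸ LinearMap.ker f) ≤ 1 := by
  have liftQ_injective : Function.Injective ((LinearMap.ker f).liftQ f le_rfl) :=
    LinearMap.ker_eq_bot.mp (Submodule.ker_liftQ_eq_bot' _ f rfl)
  simpa using LinearMap.lift_rank_le_of_injective _ liftQ_injective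

theorem rank_quotient_map_mkQ_le (N S : Submodule R M) :
    Module.rank R ((M ⧸ N) ⧸ S.map N.mkQ) ≤ Module.rank R (M ⧸ S) :=
  have mkQ_comp_mkQ_surjective := (S.map N.mkQ).mkQ_surjective.comp N.mkQ_surjective
  LinearMap.rank_le_of_surjective (S.mapQ (S.map N.mkQ) N.mkQ (Submodule.le_comap_map _ _))
    (mkQ_comp_mkQ_surjective.of_comp (g := S.mkQ))

end RankQuotient

section SqrtSelf

variable {R M : Type*} [CommRing R] [CharP R 2] [PerfectRing R 2] [AddCommGroup M] [Module R M]

/-- The function `v ↦ √(b(v, v))` for a symmetric bilinear form `b` over a perfect ring of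
characteristic 2, the square root being the inverse of the Frobenius automorphism. It is linear
and its kernel is the set `V^0` of isotropic vectors. -/
noncomputable def sqrtSelf (B : M →ₗ[R] M →ₗ[R] R) (hB : ∀ u v, B u v = B v u) : M →ₗ[R] R where
  toFun v := (frobeniusEquiv R 2).symm (B v v)
  map_add' v w := by
    have self_add : B (v + w) (v + w) = B v v + B w w := by
      rw [LinearMap.map_add₂, map_add, map_add, hB w v, add_assoc, CharTwo.add_cancel_left]
    rw [self_add, map_add]
  map_smul' c v := by
    have self_smul : B (c • v) (c • v) = c ^ 2 * B v v := by
      simp only [map_smul, LinearMap.smul_apply, smul_eq_mul]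
      ring
    rw [self_smul, map_mul, frobeniusEquiv_symm_pow, RingHom.id_apply, smul_eq_mul]

theorem mem_ker_sqrtSelf {B : M →ₗ[R] M →ₗ[R] R} (hB : ∀ u v, B u v = B v u) {v : M} :
    v ∈ LinearMap.ker (sqrtSelf B hB) ↔ B v v = 0 :=
  (frobeniusEquiv R 2).symm.map_eq_zero_iff

theorem statement6_general {B : M →ₗ[R] M →ₗ[R] R} (hB : ∀ u v, B u v = B v u)
    {V0 : Submodule R M} (hV0 : ∀ v, v ∈ V0 ↔ B v v = 0)
    (L : Submodule R M) (N : Submodule R L) :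
    Module.rank R ((L ⧸ N) ⧸ (V0.comap L.subtype).map N.mkQ) ≤ 1 := by
  have : Nontrivial R := CharP.nontrivial_of_char_ne_one (OfNat.ofNat_ne_one 2)
  have V0_eq_ker : V0 = LinearMap.ker (sqrtSelf B hB) := by
    ext v
    rw [hV0, mem_ker_sqrtSelf]
  calc Module.rank R ((L ⧸ N) ⧸ (V0.comap L.subtype).map N.mkQ)
      ≤ Module.rank R (L ⧸ V0.comap L.subtype) := rank_quotient_map_mkQ_le N _
    _ ≤ 1 := by
      rw [V0_eq_ker, ← LinearMap.ker_comp]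
      exact rank_quotient_ker_le_one _

end SqrtSelf

/-- for every flag of V and all q, r ≥ 1, the invariant
n_qr^1 = n_qr − dim Φ_qr^0 can only be 0 or 1. -/
theorem statement6 {K V : Type*} [Field K] [AddCommGroup V] [Module K V]
    [FiniteDimensional K V] [CharP K 2] [PerfectField K]
    (B : V →ₗ[K] V →ₗ[K] K)
    (hsymm : ∀ u v : V, B u v = B v u)
    (hnd : ∀ v : V, (∀ w : V, B v w = 0) → v = 0)
    (hna : ∃ v : V, B v v ≠ 0)
    (Vf : ℕ → Submodule K V) (hbot : Vf 0 = ⊥) (hmono : Monotone Vf)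
    (htop : ∃ N, ∀ q, N ≤ q → Vf q = ⊤)
    (V0 : Submodule K V) (hV0 : ∀ v : V, v ∈ V0 ↔ B v v = 0)
    (q r : ℕ) (hq : 1 ≤ q) (hr : 1 ≤ r) :
    nqr1 B Vf V0 q r = 0 ∨ nqr1 B Vf V0 q r = 1 := by
  suffices nqr1 B Vf V0 q r ≤ 1 from Nat.le_one_iff_eq_zero_or_eq_one.mp this
  rw [nqr1, nqr, ← Submodule.finrank_quotient]
  exact Module.finrank_le_of_rank_le (mod_cast statement6_general hsymm hV0 _ _)
end

section
/- Suppose that for some integers q, r ≥ 1 either q ≠ r, or q = r and n_qq^1 = 0. If u ∈ V_q ∩ V_{r−1}^⊥, v ∈ V_r ∩ V_{q−1}^⊥, and b(u,v) = 1, then V = span{u,v} ⊕ (span{u,v})^⊥, this decomposition is coordinated with the flag 𝓕, and b(u,u)·b(v,v) = 0. -/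
open Module

/-! The Gram matrix of `(u, v)` has determinant `b(u,u) b(v,v) - 1`. For `q ≠ r` the vector of
lower filtration index is orthogonal to itself, and for `q = r` the hypothesis `n_qq^1 = 0` makes
every vector of `V_q ∩ V_{q-1}^⊥` isotropic modulo vectors that are isotropic themselves; so the
determinant is `-1`. Cramer's rule then gives a division-free formula for the orthogonal projection
onto `span {u, v}`. Its coefficient at `u` vanishes on `V_j` for `j < q`, while `u ∈ V_j` for
`q ≤ j`, and similarly for `v` with `r` in place of `q`. Hence the projection preserves the flag. -/

section Perp

variable {K V : Type*} [Field K] [AddCommGroup V] [Module K V] {B : V →ₗ[K] V →ₗ[K] K}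

theorem perp_anti {L M : Submodule K V} (h : L ≤ M) : perp B M ≤ perp B L :=
  fun _ hx w hw => hx w (h hw)

theorem mem_perp_span_pair {u v x : V} :
    x ∈ perp B (Submodule.span K {u, v}) ↔ B x u = 0 ∧ B x v = 0 := by
  refine ⟨fun hx => ⟨hx u (Submodule.mem_span_pair.2 ⟨1, 0, by simp⟩),
    hx v (Submodule.mem_span_pair.2 ⟨0, 1, by simp⟩)⟩, ?_⟩
  rintro ⟨hxu, hxv⟩ w hw
  obtain ⟨a, b, rfl⟩ := Submodule.mem_span_pair.1 hw
  simp [hxu, hxv]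

theorem apply_self_eq_zero_of_mem_inf_perp {L : Submodule K V} {x : V}
    (hx : x ∈ L ⊓ perp B L) : B x x = 0 :=
  hx.2 x hx.1

end Perp

section PairProj

variable {K V : Type*} [Field K] [AddCommGroup V] [Module K V]

/-- The coefficient at `u` of the orthogonal projection of `x` onto `span {u, v}`, obtained by
Cramer's rule when the Gram matrix of `(u, v)` has off-diagonal entries `1` and determinant `-1`. -/
def pairCoeff (B : V →ₗ[K] V →ₗ[K] K) (u v x : V) : K :=
  B x v - B x u * B v v

/-- The orthogonal projection of `x` onto `span {u, v}`, meaningful when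
`B u v = B v u = 1` and `B u u * B v v = 0`. -/
def pairProj (B : V →ₗ[K] V →ₗ[K] K) (u v x : V) : V :=
  pairCoeff B u v x • u + pairCoeff B v u x • v

variable {B : V →ₗ[K] V →ₗ[K] K} {u v : V}

theorem pairProj_mem_span_pair (x : V) : pairProj B u v x ∈ Submodule.span K {u, v} :=
  Submodule.mem_span_pair.2 ⟨_, _, rfl⟩

theorem sub_pairProj_mem_perp (huv : B u v = 1) (hvu : B v u = 1) (hprod : B u u * B v v = 0)
    (x : V) : x - pairProj B u v x ∈ perp B (Submodule.span K {u, v}) := by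
  rw [mem_perp_span_pair]
  simp only [pairProj, pairCoeff, map_sub, map_add, map_smul, LinearMap.sub_apply,
    LinearMap.add_apply, LinearMap.smul_apply, smul_eq_mul, huv, hvu]
  exact ⟨by linear_combination B x u * hprod, by linear_combination B x v * hprod⟩

theorem pairProj_eq_self_of_mem_span_pair (huv : B u v = 1) (hvu : B v u = 1)
    (hprod : B u u * B v v = 0) {x : V} (hx : x ∈ Submodule.span K {u, v}) :
    pairProj B u v x = x := by
  obtain ⟨a, b, rfl⟩ := Submodule.mem_span_pair.1 hx
  have coeff_u : pairCoeff B u v (a • u + b • v) = a := by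
    simp only [pairCoeff, map_add, map_smul, LinearMap.add_apply, LinearMap.smul_apply,
      smul_eq_mul, huv, hvu]
    linear_combination -a * hprod
  have coeff_v : pairCoeff B v u (a • u + b • v) = b := by
    simp only [pairCoeff, map_add, map_smul, LinearMap.add_apply, LinearMap.smul_apply,
      smul_eq_mul, huv, hvu]
    linear_combination -b * hprod
  rw [pairProj, coeff_u, coeff_v]

theorem pairProj_eq_zero_of_mem_perp {x : V} (hx : x ∈ perp B (Submodule.span K {u, v})) :
    pairProj B u v x = 0 := by
  obtain ⟨hxu, hxv⟩ := mem_perp_span_pair.1 hx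
  simp [pairProj, pairCoeff, hxu, hxv]

theorem eq_inf_span_pair_sup_inf_perp (huv : B u v = 1) (hvu : B v u = 1)
    (hprod : B u u * B v v = 0) {L : Submodule K V} (hL : ∀ x ∈ L, pairProj B u v x ∈ L) :
    L = L ⊓ Submodule.span K {u, v} ⊔ L ⊓ perp B (Submodule.span K {u, v}) := by
  refine le_antisymm (fun x hx => ?_) (sup_le inf_le_left inf_le_left)
  exact Submodule.mem_sup.2 ⟨pairProj B u v x, ⟨hL x hx, pairProj_mem_span_pair x⟩,
    x - pairProj B u v x, ⟨L.sub_mem hx (hL x hx), sub_pairProj_mem_perp huv hvu hprod x⟩,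
    add_sub_cancel _ _⟩

theorem isCompl_span_pair_perp (huv : B u v = 1) (hvu : B v u = 1)
    (hprod : B u u * B v v = 0) :
    IsCompl (Submodule.span K {u, v}) (perp B (Submodule.span K {u, v})) where
  disjoint := Submodule.disjoint_def.2 fun _ hx hx' =>
    (pairProj_eq_self_of_mem_span_pair huv hvu hprod hx).symm.trans
      (pairProj_eq_zero_of_mem_perp hx')
  codisjoint := codisjoint_iff.2 <| by
    simpa only [top_inf_eq] using
      (eq_inf_span_pair_sup_inf_perp huv hvu hprod (L := ⊤) fun _ _ => trivial).symm

end PairProj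

section Flag

variable {K V ι : Type*} [Field K] [AddCommGroup V] [Module K V] [LinearOrder ι]
  {B : V →ₗ[K] V →ₗ[K] K} {F : ι → Submodule K V} {q r j : ι} {u v x : V}

theorem apply_self_mul_apply_self_eq_zero
    (hu : u ∈ F q) (hu' : ∀ i < r, u ∈ perp B (F i))
    (hv : v ∈ F r) (hv' : ∀ i < q, v ∈ perp B (F i))
    (hdiag : q = r → B u u = 0) : B u u * B v v = 0 := by
  rcases lt_trichotomy q r with hqr | hqr | hrq
  · rw [apply_self_eq_zero_of_mem_inf_perp ⟨hu, hu' q hqr⟩, zero_mul]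
  · rw [hdiag hqr, zero_mul]
  · rw [apply_self_eq_zero_of_mem_inf_perp ⟨hv, hv' r hrq⟩, mul_zero]

theorem pairCoeff_smul_mem (hB : B.IsSymm) (hF : Monotone F)
    (hu : u ∈ F q) (hu' : ∀ i < r, u ∈ perp B (F i))
    (hv : v ∈ F r) (hv' : ∀ i < q, v ∈ perp B (F i)) (hx : x ∈ F j) :
    pairCoeff B u v x • u ∈ F j := by
  rcases le_or_gt q j with hqj | hjq
  · exact (F j).smul_mem _ (hF hqj hu)
  have hxv : B x v = 0 := (hB.eq v x).symm.trans (hv' j hjq x hx)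
  have hxu_vv : B x u * B v v = 0 := by
    rcases le_or_gt r j with hrj | hjr
    · rw [apply_self_eq_zero_of_mem_inf_perp ⟨hF hrj hv, hv' j hjq⟩, mul_zero]
    · rw [show B x u = 0 from (hB.eq u x).symm.trans (hu' j hjr x hx), zero_mul]
  simp [pairCoeff, hxv, hxu_vv]

theorem pairProj_mem_of_mem (hB : B.IsSymm) (hF : Monotone F)
    (hu : u ∈ F q) (hu' : ∀ i < r, u ∈ perp B (F i))
    (hv : v ∈ F r) (hv' : ∀ i < q, v ∈ perp B (F i)) (hx : x ∈ F j) :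
    pairProj B u v x ∈ F j :=
  (F j).add_mem (pairCoeff_smul_mem hB hF hu hu' hv hv' hx)
    (pairCoeff_smul_mem hB hF hv hv' hu hu' hx)

end Flag

section GradedPieces

variable {K V : Type*} [Field K] [AddCommGroup V] [Module K V] [FiniteDimensional K V]
  {B : V →ₗ[K] V →ₗ[K] K} {F : ℕ → Submodule K V} {V0 : Submodule K V}

theorem inf_perp_le_of_nqr1_eq_zero {q r : ℕ} (h : nqr1 B F V0 q r = 0) :
    F q ⊓ perp B (F (r - 1)) ≤
      (F q ⊓ perp B (F r) ⊔ F (q - 1) ⊓ perp B (F (r - 1))) ⊔ V0 := by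
  have map_eq_top := Submodule.eq_top_of_finrank_eq
    ((Submodule.finrank_le _).antisymm (Nat.sub_eq_zero_iff_le.mp h))
  rw [Submodule.map_mkQ_eq_top] at map_eq_top
  rw [← Submodule.comap_subtype_eq_top, eq_top_iff, ← map_eq_top]
  exact sup_le (Submodule.comap_mono le_sup_left) (Submodule.comap_mono le_sup_right)

theorem inf_perp_le_isotropic_of_nqr1_eq_zero (hV0 : ∀ x, B x x = 0 → x ∈ V0) {q : ℕ}
    (h : nqr1 B F V0 q q = 0) : F q ⊓ perp B (F (q - 1)) ≤ V0 := by
  have inf_perp_le (L : Submodule K V) : L ⊓ perp B L ≤ V0 :=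
    fun x hx => hV0 x (apply_self_eq_zero_of_mem_inf_perp hx)
  exact (inf_perp_le_of_nqr1_eq_zero h).trans
    (sup_le (sup_le (inf_perp_le _) (inf_perp_le _)) le_rfl)

theorem statement7_general (hB : B.IsSymm) (hF : Monotone F)
    (hV0 : ∀ x, x ∈ V0 ↔ B x x = 0) {q r : ℕ} (hcase : q ≠ r ∨ nqr1 B F V0 q q = 0) {u v : V}
    (hu : u ∈ F q ⊓ perp B (F (r - 1))) (hv : v ∈ F r ⊓ perp B (F (q - 1)))
    (huv : B u v = 1) :
    IsCompl (Submodule.span K {u, v}) (perp B (Submodule.span K {u, v})) ∧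
    (∀ j, F j = F j ⊓ Submodule.span K {u, v} ⊔ F j ⊓ perp B (Submodule.span K {u, v})) ∧
    B u u * B v v = 0 := by
  have hvu : B v u = 1 := (hB.eq u v).symm.trans huv
  have hu_perp : ∀ i < r, u ∈ perp B (F i) :=
    fun i hi => perp_anti (hF (Nat.le_sub_one_of_lt hi)) hu.2
  have hv_perp : ∀ i < q, v ∈ perp B (F i) :=
    fun i hi => perp_anti (hF (Nat.le_sub_one_of_lt hi)) hv.2
  have hdiag : q = r → B u u = 0 := by
    rintro rfl
    have hn := hcase.resolve_left (not_not_intro rfl)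
    exact (hV0 u).1 (inf_perp_le_isotropic_of_nqr1_eq_zero (fun x => (hV0 x).2) hn hu)
  have hprod := apply_self_mul_apply_self_eq_zero hu.1 hu_perp hv.1 hv_perp hdiag
  exact ⟨isCompl_span_pair_perp huv hvu hprod,
    fun _ => eq_inf_span_pair_sup_inf_perp huv hvu hprod fun _ =>
      pairProj_mem_of_mem hB hF hu.1 hu_perp hv.1 hv_perp, hprod⟩

end GradedPieces

/-- Lemma 1.1: suppose for some q, r ≥ 1 either q ≠ r, or q = r and
n_qq^1 = 0. If u ∈ V_q ∩ V_{r−1}^⊥, v ∈ V_r ∩ V_{q−1}^⊥ and b(u,v) = 1, then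
V = span{u,v} ⊕ span{u,v}^⊥, this decomposition is coordinated with the flag,
and b(u,u)·b(v,v) = 0. -/
theorem statement7 {K V : Type*} [Field K] [AddCommGroup V] [Module K V]
    [FiniteDimensional K V] [CharP K 2] [PerfectField K]
    (B : V →ₗ[K] V →ₗ[K] K)
    (hsymm : ∀ u v : V, B u v = B v u)
    (hnd : ∀ v : V, (∀ w : V, B v w = 0) → v = 0)
    (hna : ∃ v : V, B v v ≠ 0)
    (Vf : ℕ → Submodule K V) (hbot : Vf 0 = ⊥) (hmono : Monotone Vf)
    (htop : ∃ N, ∀ q, N ≤ q → Vf q = ⊤)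
    (V0 : Submodule K V) (hV0 : ∀ v : V, v ∈ V0 ↔ B v v = 0)
    (q r : ℕ) (hq : 1 ≤ q) (hr : 1 ≤ r)
    (hcase : q ≠ r ∨ nqr1 B Vf V0 q q = 0)
    (u v : V)
    (hu : u ∈ Vf q ⊓ perp B (Vf (r - 1)))
    (hv : v ∈ Vf r ⊓ perp B (Vf (q - 1)))
    (huv : B u v = 1) :
    IsCompl (Submodule.span K {u, v}) (perp B (Submodule.span K {u, v})) ∧
    (∀ j : ℕ, Vf j = Vf j ⊓ Submodule.span K {u, v}
        ⊔ Vf j ⊓ perp B (Submodule.span K {u, v})) ∧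
    B u u * B v v = 0 :=
  statement7_general ⟨hsymm⟩ hmono hV0 hcase hu hv huv
end

section
/- For every integer q ≥ 1, if n_qq^1 = 0, then every vector of V_q ∩ V_{q−1}^⊥ is isotropic, i.e. V_q ∩ V_{q−1}^⊥ ⊆ V^0. -/
open Module

/-!
Both summands `V_q ∩ V_q^⊥` and `V_{q-1} ∩ V_{q-1}^⊥` of the denominator of `Φ_qq` consist of
isotropic vectors. Hence the equality `Φ_qq^0 = Φ_qq`, which is what `n_qq^1 = 0` means, says that
every vector of `V_q ∩ V_{q-1}^⊥` differs from an isotropic one by an isotropic one. Isotropic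
vectors form a subspace, so it is isotropic itself.
-/

theorem map_mkQ_comap_subtype_eq_top_iff {R M : Type*} [Ring R] [AddCommGroup M] [Module R M]
    {P N W : Submodule R M} (hNW : N ≤ W) :
    (W.comap P.subtype).map (N.comap P.subtype).mkQ = ⊤ ↔ P ≤ W := by
  rw [Submodule.map_mkQ_eq_top, sup_eq_right.mpr (Submodule.comap_mono hNW),
    Submodule.comap_subtype_eq_top]

section Flag

variable {K V : Type*} [Field K] [AddCommGroup V] [Module K V] (B : V →ₗ[K] V →ₗ[K] K)

/-- The subquotient `Φ_qr` of a flag, whose dimension is `n_qr`. The indices `q - 1` and `r - 1`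
are truncated at `0`. -/
abbrev FlagSubquotient (Vf : ℕ → Submodule K V) (q r : ℕ) : Type _ :=
  ↥(Vf q ⊓ perp B (Vf (r - 1))) ⧸
    (Vf q ⊓ perp B (Vf r) ⊔ Vf (q - 1) ⊓ perp B (Vf (r - 1))).comap
      (Vf q ⊓ perp B (Vf (r - 1))).subtype

/-- The subspace `Φ_qr^0` of `Φ_qr`, with `V0` in the role of the space of isotropic vectors. -/
def isotropicPart (Vf : ℕ → Submodule K V) (V0 : Submodule K V) (q r : ℕ) :
    Submodule K (FlagSubquotient B Vf q r) :=
  (V0.comap (Vf q ⊓ perp B (Vf (r - 1))).subtype).map (Submodule.mkQ _)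

variable {B} {Vf : ℕ → Submodule K V} {V0 : Submodule K V}

theorem nqr1_eq_zero_iff_isotropicPart_eq_top {q r : ℕ}
    [FiniteDimensional K (FlagSubquotient B Vf q r)] :
    nqr1 B Vf V0 q r = 0 ↔ isotropicPart B Vf V0 q r = ⊤ := by
  change finrank K (FlagSubquotient B Vf q r) - finrank K (isotropicPart B Vf V0 q r) = 0 ↔ _
  rw [Nat.sub_eq_zero_iff_le]
  refine ⟨fun hle => Submodule.eq_top_of_finrank_eq ((Submodule.finrank_le _).antisymm hle),
    fun htop => ?_⟩
  rw [htop, finrank_top]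

theorem inf_perp_self_le (hV0 : ∀ v, B v v = 0 → v ∈ V0) (L : Submodule K V) :
    L ⊓ perp B L ≤ V0 :=
  fun v ⟨hvL, hvperp⟩ => hV0 v (hvperp v hvL)

theorem statement8_general (hV0 : ∀ v, v ∈ V0 ↔ B v v = 0) (q : ℕ)
    [FiniteDimensional K (FlagSubquotient B Vf (q + 1) (q + 1))] :
    nqr1 B Vf V0 (q + 1) (q + 1) = 0 ↔ Vf (q + 1) ⊓ perp B (Vf q) ≤ V0 := by
  have isotropic_le (L : Submodule K V) : L ⊓ perp B L ≤ V0 :=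
    inf_perp_self_le (fun v => (hV0 v).mpr) L
  exact nqr1_eq_zero_iff_isotropicPart_eq_top.trans
    (map_mkQ_comap_subtype_eq_top_iff (sup_le (isotropic_le _) (isotropic_le _)))

end Flag

/-- for every q ≥ 1, if n_qq^1 = 0, then every vector of
V_q ∩ V_{q−1}^⊥ is isotropic, i.e. V_q ∩ V_{q−1}^⊥ ⊆ V^0. -/
theorem statement8 {K V : Type*} [Field K] [AddCommGroup V] [Module K V]
    [FiniteDimensional K V] [CharP K 2] [PerfectField K]
    (B : V →ₗ[K] V →ₗ[K] K)
    (hsymm : ∀ u v : V, B u v = B v u)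
    (hnd : ∀ v : V, (∀ w : V, B v w = 0) → v = 0)
    (hna : ∃ v : V, B v v ≠ 0)
    (Vf : ℕ → Submodule K V) (hbot : Vf 0 = ⊥) (hmono : Monotone Vf)
    (htop : ∃ N, ∀ q, N ≤ q → Vf q = ⊤)
    (V0 : Submodule K V) (hV0 : ∀ v : V, v ∈ V0 ↔ B v v = 0)
    (q : ℕ) (hq : 1 ≤ q)
    (h1 : nqr1 B Vf V0 q q = 0) :
    Vf q ⊓ perp B (Vf (q - 1)) ≤ V0 := by
  obtain ⟨q, rfl⟩ := Nat.exists_eq_add_of_le' hq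
  exact (statement8_general hV0 q).mp h1
end

section
/- Two triples (V, 𝓕, b) and (V′, 𝓕′, b′) are equivalent — i.e., there exists a K-linear isomorphism φ : V → V′ with φ(V_j) = V′_j for all j ≥ 0 and b′(φ(u), φ(v)) = b(u,v) for all u, v ∈ V — if and only if n_qr = n′_qr and n_qr^1 = n′_qr^1 for all q, r ≥ 1. -/
open Module

/-!
Over a perfect field of characteristic 2 the map `v ↦ √b(v, v)` is a linear functional `f`. An
inductive count shows that the numbers `n_qr` and `n_qr^1` carry the same information as the
dimensions of the subspaces `V_a ∩ V_b^⊥` together with the truth values of `V_a ∩ V_b^⊥ ⊆ ker f`.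
An isometry between triples sharing these data is built by induction on the dimension, splitting off
matching orthogonal summands. Let `V_r` be the first nonzero step of the flag, let `q` be minimal
with `V_r ∩ V_q^⊥ = 0`, and put `L = V_r ∩ V_{q-1}^⊥`, which is nonzero. Every unit vector of `V_r`,
and every nondegenerate plane spanned by some `x ∈ V_q` and some isotropic `y ∈ L`, splits off
compatibly with the flag. The point is to choose the summand so that the truth values on its
complement are determined by those on `V`:

* if `L` is a line and some `y ∈ L` represents `f` on `V_q`, then the summand must contain `y`, and
  on the complement `V_a ∩ V_b^⊥` takes the truth value of `V_a ∩ V_{max b r}^⊥`;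
* otherwise a hyperbolic plane (if `L ⊆ ker f`) or a unit vector `x` with
  `V_r ∩ x^⊥ ⊄ ker f` (if not) can be split off, and the truth values do not change.
-/

section LinearAlgebra

variable {K V V' : Type*} [Field K] [AddCommGroup V] [Module K V] [AddCommGroup V'] [Module K V']

theorem finrank_comap_subtype (A T : Submodule K V) :
    finrank K (T.comap A.subtype) = finrank K ↥(A ⊓ T) := by
  rw [← Submodule.finrank_map_subtype_eq, Submodule.map_comap_subtype]

theorem finrank_map_add_finrank_inf_ker [FiniteDimensional K V] (g : V →ₗ[K] V')
    (S : Submodule K V) :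
    finrank K (S.map g) + finrank K ↥(S ⊓ LinearMap.ker g) = finrank K S := by
  have h := LinearMap.finrank_range_add_finrank_ker (g.domRestrict S)
  rwa [LinearMap.range_domRestrict, LinearMap.domRestrict, LinearMap.ker_comp,
    finrank_comap_subtype] at h

theorem finrank_quotient_comap_subtype_add [FiniteDimensional K V] {A C : Submodule K V}
    (hC : C ≤ A) : finrank K (A ⧸ C.comap A.subtype) + finrank K C = finrank K A := by
  rw [← Submodule.finrank_quotient_add_finrank (C.comap A.subtype), finrank_comap_subtype,
    inf_eq_right.2 hC]

theorem finrank_map_mkQ_comap_subtype_add [FiniteDimensional K V] {A C : Submodule K V}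
    (hC : C ≤ A) (T : Submodule K V) :
    finrank K ((T.comap A.subtype).map (C.comap A.subtype).mkQ) + finrank K ↥(C ⊓ T) =
      finrank K ↥(A ⊓ T) := by
  have h := finrank_map_add_finrank_inf_ker (C.comap A.subtype).mkQ (T.comap A.subtype)
  rwa [Submodule.ker_mkQ, ← Submodule.comap_inf, finrank_comap_subtype, finrank_comap_subtype,
    inf_comm T, ← inf_assoc, inf_eq_right.2 hC] at h

theorem finrank_quotient_sub_finrank_map_ker_add [FiniteDimensional K V]
    {A C : Submodule K V} (hC : C ≤ A) (f : V →ₗ[K] V') :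
    finrank K (A ⧸ C.comap A.subtype) -
        finrank K (((LinearMap.ker f).comap A.subtype).map (C.comap A.subtype).mkQ) +
        finrank K (C.map f) = finrank K (A.map f) := by
  have hquot := finrank_quotient_comap_subtype_add hC
  have himage := finrank_map_mkQ_comap_subtype_add hC (LinearMap.ker f)
  have himage_le := Submodule.finrank_le
    (((LinearMap.ker f).comap A.subtype).map (C.comap A.subtype).mkQ)
  have hmapC := finrank_map_add_finrank_inf_ker f C
  have hmapA := finrank_map_add_finrank_inf_ker f A
  omega

theorem finrank_map_le_one (g : V →ₗ[K] K) (S : Submodule K V) : finrank K (S.map g) ≤ 1 :=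
  (Submodule.finrank_le _).trans (finrank_self K).le

theorem finrank_map_eq_iff_le_ker_iff {f : V →ₗ[K] K} {f' : V' →ₗ[K] K} {S : Submodule K V}
    {S' : Submodule K V'} :
    finrank K (S.map f) = finrank K (S'.map f') ↔
      (S ≤ LinearMap.ker f ↔ S' ≤ LinearMap.ker f') := by
  have h := finrank_map_le_one f S
  have h' := finrank_map_le_one f' S'
  rw [LinearMap.le_ker_iff_map, LinearMap.le_ker_iff_map, ← Submodule.finrank_eq_zero (R := K),
    ← Submodule.finrank_eq_zero (R := K)]
  omega

theorem ker_smulRight (g : V →ₗ[K] K) {x : V'} (hx : x ≠ 0) :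
    LinearMap.ker (g.smulRight x) = LinearMap.ker g := by
  ext v
  simp [hx]

theorem finrank_eq_one_iff_forall_exists_smul_eq {S : Submodule K V} {y : V} (hy : y ∈ S)
    (hy0 : y ≠ 0) : finrank K S = 1 ↔ ∀ w ∈ S, ∃ c : K, c • y = w := by
  rw [finrank_eq_one_iff_of_nonzero' (⟨y, hy⟩ : S) (by simpa using hy0)]
  simp [Subtype.ext_iff]

theorem apply_eq_div_mul_of_inf_ker_le_ker {f g : V →ₗ[K] K} {S : Submodule K V} {x v : V}
    (hx : x ∈ S) (hfx : f x ≠ 0) (h : S ⊓ LinearMap.ker f ≤ LinearMap.ker g) (hv : v ∈ S) :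
    g v = g x / f x * f v := by
  have hker : g (v - (f v / f x) • x) = 0 :=
    h ⟨S.sub_mem hv (S.smul_mem _ hx), by simp [hfx]⟩
  rw [map_sub, map_smul, smul_eq_mul, sub_eq_zero] at hker
  rw [hker]
  ring

end LinearAlgebra

section Perp

variable {K V : Type*} [Field K] [AddCommGroup V] [Module K V] {B : V →ₗ[K] V →ₗ[K] K}

theorem mem_perp {L : Submodule K V} {v : V} : v ∈ perp B L ↔ ∀ w ∈ L, B v w = 0 := Iff.rfl

theorem perp_bot : perp B ⊥ = ⊤ :=
  eq_top_iff.2 fun v _ w hw => by rw [(Submodule.mem_bot K).1 hw, map_zero]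

theorem perp_top (hB : B.SeparatingLeft) : perp B ⊤ = ⊥ :=
  eq_bot_iff.2 fun v hv => hB v fun w => hv w trivial

theorem perp_perp [FiniteDimensional K V] (hsymm : ∀ u v, B u v = B v u)
    (hB : B.SeparatingLeft) (L : Submodule K V) : perp B (perp B L) = L := by
  have perp_eq (M : Submodule K V) : perp B M = LinearMap.BilinForm.orthogonal B M := by
    ext v
    simp only [mem_perp, LinearMap.BilinForm.mem_orthogonal_iff]
    exact forall₂_congr fun w _ => by rw [hsymm]
  rw [perp_eq, perp_eq]
  refine LinearMap.BilinForm.orthogonal_orthogonal ⟨hB, fun v h => hB v fun w => ?_⟩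
    (fun u v h => ?_) L
  · rw [hsymm, h]
  · rw [hsymm, h]

theorem perp_inf_perp_le [FiniteDimensional K V] (hsymm : ∀ u v, B u v = B v u)
    (hB : B.SeparatingLeft) (A C : Submodule K V) : perp B (A ⊓ perp B C) ≤ perp B A ⊔ C := by
  rw [← perp_perp hsymm hB (perp B A ⊔ C)]
  refine perp_anti (le_inf ?_ (perp_anti le_sup_right))
  exact (perp_anti le_sup_left).trans (perp_perp hsymm hB A).le

end Perp

/-- The subspace `V_a ∩ V_b^⊥`. -/
def infPerp {K V : Type*} [Field K] [AddCommGroup V] [Module K V]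
    (B : V →ₗ[K] V →ₗ[K] K) (F : ℕ → Submodule K V) (a b : ℕ) : Submodule K V :=
  F a ⊓ perp B (F b)

/-- A triple `(V, 𝓕, b)` together with a linear functional `f` such that `b(v, v) = f(v) ^ 2`, so
that the isotropic vectors are the kernel of `f`. Over a perfect field of characteristic 2 every
symmetric form has such a functional; no condition on the field is imposed here. -/
structure FlaggedForm {K V : Type*} [Field K] [AddCommGroup V] [Module K V]
    (B : V →ₗ[K] V →ₗ[K] K) (f : V →ₗ[K] K) (F : ℕ → Submodule K V) : Prop where
  symm : ∀ u v : V, B u v = B v u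
  separatingLeft : B.SeparatingLeft
  apply_self : ∀ v : V, B v v = f v ^ 2
  zero_eq_bot : F 0 = ⊥
  mono : Monotone F
  exists_eq_top : ∃ N, ∀ q, N ≤ q → F q = ⊤

/-- Two triples with functionals agree in the dimension of `V_a ∩ V_b^⊥` and in the truth value of
`V_a ∩ V_b^⊥ ⊆ ker f`. Over all `a`, `b` this is equivalent to equality of all `n_qr` and `n_qr^1`,
and it is easier to follow under orthogonal decompositions. -/
def SameInvariantsAt {K V V' : Type*} [Field K] [AddCommGroup V] [Module K V]
    [AddCommGroup V'] [Module K V'] (B : V →ₗ[K] V →ₗ[K] K) (f : V →ₗ[K] K)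
    (F : ℕ → Submodule K V) (B' : V' →ₗ[K] V' →ₗ[K] K) (f' : V' →ₗ[K] K)
    (F' : ℕ → Submodule K V') (a b : ℕ) : Prop :=
  finrank K (infPerp B F a b) = finrank K (infPerp B' F' a b) ∧
    (infPerp B F a b ≤ LinearMap.ker f ↔ infPerp B' F' a b ≤ LinearMap.ker f')

section Invariants

variable {K V V' : Type*} [Field K] [AddCommGroup V] [Module K V] [AddCommGroup V'] [Module K V']
  {B : V →ₗ[K] V →ₗ[K] K} {B' : V' →ₗ[K] V' →ₗ[K] K} {f : V →ₗ[K] K} {f' : V' →ₗ[K] K}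
  {F : ℕ → Submodule K V} {F' : ℕ → Submodule K V'}

theorem infPerp_mono_left (hF : Monotone F) {a a' : ℕ} (h : a ≤ a') (b : ℕ) :
    infPerp B F a b ≤ infPerp B F a' b :=
  inf_le_inf_right _ (hF h)

theorem infPerp_anti_right (hF : Monotone F) (a : ℕ) {b b' : ℕ} (h : b ≤ b') :
    infPerp B F a b' ≤ infPerp B F a b :=
  inf_le_inf_left _ (perp_anti (hF h))

theorem infPerp_eq_of_eq_bot {a b : ℕ} (h : F b = ⊥) : infPerp B F a b = F a := by
  rw [infPerp, h, perp_bot, inf_top_eq]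

theorem infPerp_sup_infPerp_le (hF : Monotone F) (q r : ℕ) :
    infPerp B F q r ⊔ infPerp B F (q - 1) (r - 1) ≤ infPerp B F q (r - 1) :=
  sup_le (infPerp_anti_right hF q (Nat.sub_le r 1)) (infPerp_mono_left hF (Nat.sub_le q 1) _)

theorem infPerp_inf_infPerp (hF : Monotone F) (q r : ℕ) :
    infPerp B F q r ⊓ infPerp B F (q - 1) (r - 1) = infPerp B F (q - 1) r :=
  le_antisymm (fun _ hv => ⟨hv.2.1, hv.1.2⟩)
    (le_inf (infPerp_mono_left hF (Nat.sub_le q 1) r)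
      (infPerp_anti_right hF (q - 1) (Nat.sub_le r 1)))

theorem nqr_add [FiniteDimensional K V] (hF : Monotone F) (q r : ℕ) :
    nqr B F q r + finrank K (infPerp B F q r) + finrank K (infPerp B F (q - 1) (r - 1)) =
      finrank K (infPerp B F q (r - 1)) + finrank K (infPerp B F (q - 1) r) := by
  have hsup := Submodule.finrank_sup_add_finrank_inf_eq (infPerp B F q r)
    (infPerp B F (q - 1) (r - 1))
  have hquot : nqr B F q r + finrank K ↥(infPerp B F q r ⊔ infPerp B F (q - 1) (r - 1)) =
      finrank K (infPerp B F q (r - 1)) :=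
    finrank_quotient_comap_subtype_add (infPerp_sup_infPerp_le hF q r)
  rw [infPerp_inf_infPerp hF] at hsup
  omega

theorem nqr1_add [FiniteDimensional K V] (hF : Monotone F) (f : V →ₗ[K] K) (q r : ℕ) :
    nqr1 B F (LinearMap.ker f) q r +
        finrank K ((infPerp B F q r ⊔ infPerp B F (q - 1) (r - 1)).map f) =
      finrank K ((infPerp B F q (r - 1)).map f) :=
  finrank_quotient_sub_finrank_map_ker_add (infPerp_sup_infPerp_le hF q r) f

theorem sameInvariantsAt_iff_nqr_eq_and_nqr1_eq [FiniteDimensional K V] [FiniteDimensional K V']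
    (hF : Monotone F) (hF' : Monotone F') {q r : ℕ}
    (h₁ : SameInvariantsAt B f F B' f' F' q r)
    (h₂ : SameInvariantsAt B f F B' f' F' (q - 1) r)
    (h₃ : SameInvariantsAt B f F B' f' F' (q - 1) (r - 1)) :
    SameInvariantsAt B f F B' f' F' q (r - 1) ↔
      nqr B F q r = nqr B' F' q r ∧
        nqr1 B F (LinearMap.ker f) q r = nqr1 B' F' (LinearMap.ker f') q r := by
  have hn := nqr_add (B := B) hF q r
  have hn' := nqr_add (B := B') hF' q r
  have hn1 := nqr1_add (B := B) hF f q r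
  have hn1' := nqr1_add (B := B') hF' f' q r
  have hsup : finrank K ((infPerp B F q r ⊔ infPerp B F (q - 1) (r - 1)).map f) =
      finrank K ((infPerp B' F' q r ⊔ infPerp B' F' (q - 1) (r - 1)).map f') := by
    rw [finrank_map_eq_iff_le_ker_iff, sup_le_iff, sup_le_iff, h₁.2, h₃.2]
  have hdim := h₁.1
  have hdim₂ := h₂.1
  have hdim₃ := h₃.1
  rw [SameInvariantsAt, ← finrank_map_eq_iff_le_ker_iff]
  omega

theorem sameInvariantsAt_of_eq_bot {a b : ℕ} (h : infPerp B F a b = ⊥)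
    (h' : infPerp B' F' a b = ⊥) : SameInvariantsAt B f F B' f' F' a b := by
  rw [SameInvariantsAt, h, h']
  simp

theorem FlaggedForm.infPerp_zero_left (hB : FlaggedForm B f F) (b : ℕ) : infPerp B F 0 b = ⊥ := by
  rw [infPerp, hB.zero_eq_bot, bot_inf_eq]

theorem FlaggedForm.infPerp_zero_right (hB : FlaggedForm B f F) (a : ℕ) :
    infPerp B F a 0 = F a :=
  infPerp_eq_of_eq_bot hB.zero_eq_bot

theorem FlaggedForm.infPerp_eq_bot (hB : FlaggedForm B f F) (a : ℕ) {b : ℕ} (h : F b = ⊤) :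
    infPerp B F a b = ⊥ := by
  rw [infPerp, h, perp_top hB.separatingLeft, inf_bot_eq]

theorem FlaggedForm.sameInvariantsAt_iff [FiniteDimensional K V] [FiniteDimensional K V']
    (hB : FlaggedForm B f F) (hB' : FlaggedForm B' f' F') :
    (∀ a b, SameInvariantsAt B f F B' f' F' a b) ↔ ∀ q r, 1 ≤ q → 1 ≤ r →
      nqr B F q r = nqr B' F' q r ∧
        nqr1 B F (LinearMap.ker f) q r = nqr1 B' F' (LinearMap.ker f') q r := by
  refine ⟨fun h q r _ _ => (sameInvariantsAt_iff_nqr_eq_and_nqr1_eq hB.mono hB'.mono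
    (h q r) (h _ r) (h _ _)).1 (h q _), fun h a => ?_⟩
  obtain ⟨N, hN⟩ := hB.exists_eq_top
  obtain ⟨N', hN'⟩ := hB'.exists_eq_top
  have large (a b : ℕ) (hb : max N N' ≤ b) : SameInvariantsAt B f F B' f' F' a b :=
    sameInvariantsAt_of_eq_bot (hB.infPerp_eq_bot a (hN b (le_of_max_le_left hb)))
      (hB'.infPerp_eq_bot a (hN' b (le_of_max_le_right hb)))
  induction a with
  | zero =>
    exact fun b => sameInvariantsAt_of_eq_bot (hB.infPerp_zero_left b) (hB'.infPerp_zero_left b)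
  | succ a ih =>
    have step (b : ℕ) (hb : SameInvariantsAt B f F B' f' F' (a + 1) (b + 1)) :
        SameInvariantsAt B f F B' f' F' (a + 1) b :=
      (sameInvariantsAt_iff_nqr_eq_and_nqr1_eq hB.mono hB'.mono hb (ih (b + 1)) (ih b)).2
        (h _ _ (Nat.le_add_left 1 a) (Nat.le_add_left 1 b))
    intro b
    rcases le_total (max N N') b with hb | hb
    · exact large _ b hb
    · exact Nat.decreasingInduction (fun b _ => step b) (large _ _ le_rfl) hb

end Invariants

/-- The restriction to a subspace `U` of a chain of subspaces of `V`. -/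
def restrictFlag {K V : Type*} [Field K] [AddCommGroup V] [Module K V]
    (F : ℕ → Submodule K V) (U : Submodule K V) (j : ℕ) : Submodule K U :=
  (F j).comap U.subtype

/-- Existence of a linear map preserving the forms and carrying each step of the first flag into
the corresponding step of the second. -/
def FlagEmbeds {K V V' : Type*} [Field K] [AddCommGroup V] [Module K V]
    [AddCommGroup V'] [Module K V'] (B : V →ₗ[K] V →ₗ[K] K) (F : ℕ → Submodule K V)
    (B' : V' →ₗ[K] V' →ₗ[K] K) (F' : ℕ → Submodule K V') : Prop :=
  ∃ ψ : V →ₗ[K] V', (∀ u v, B' (ψ u) (ψ v) = B u v) ∧ ∀ j, ∀ v ∈ F j, ψ v ∈ F' j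

/-- Adjoint, flag-preserving linear maps `ρ : V → V'` and `σ : V' → V` which are pseudo-inverses of
each other. Then `V` is the orthogonal direct sum of `range σ` and `ker ρ`, the flag splits
accordingly, and `ρ` is an isometry of `range σ` onto `range ρ`. -/
structure FlagPartialIsometry {K V V' : Type*} [Field K] [AddCommGroup V] [Module K V]
    [AddCommGroup V'] [Module K V'] (B : V →ₗ[K] V →ₗ[K] K) (F : ℕ → Submodule K V)
    (B' : V' →ₗ[K] V' →ₗ[K] K) (F' : ℕ → Submodule K V') (ρ : V →ₗ[K] V') (σ : V' →ₗ[K] V) :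
    Prop where
  adjoint : ∀ v v', B' (ρ v) v' = B v (σ v')
  map_map_map : ∀ v, ρ (σ (ρ v)) = ρ v
  map_map_map' : ∀ v', σ (ρ (σ v')) = σ v'
  map_mem : ∀ j, ∀ v ∈ F j, ρ v ∈ F' j
  map_mem' : ∀ j, ∀ v' ∈ F' j, σ v' ∈ F j

namespace FlagPartialIsometry

variable {K V V' : Type*} [Field K] [AddCommGroup V] [Module K V] [AddCommGroup V'] [Module K V']
  {B : V →ₗ[K] V →ₗ[K] K} {B' : V' →ₗ[K] V' →ₗ[K] K} {f : V →ₗ[K] K} {f' : V' →ₗ[K] K}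
  {F : ℕ → Submodule K V} {F' : ℕ → Submodule K V'} {ρ : V →ₗ[K] V'} {σ : V' →ₗ[K] V}

theorem symm (h : FlagPartialIsometry B F B' F' ρ σ) (hsymm : ∀ u v, B u v = B v u)
    (hsymm' : ∀ u v, B' u v = B' v u) : FlagPartialIsometry B' F' B F σ ρ where
  adjoint v' v := by rw [hsymm, hsymm', h.adjoint]
  map_map_map := h.map_map_map'
  map_map_map' := h.map_map_map
  map_mem := h.map_mem'
  map_mem' := h.map_mem

theorem sub_mem_ker (h : FlagPartialIsometry B F B' F' ρ σ) (v : V) :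
    v - σ (ρ v) ∈ LinearMap.ker ρ := by
  rw [LinearMap.mem_ker, map_sub, h.map_map_map, sub_self]

theorem sub_mem (h : FlagPartialIsometry B F B' F' ρ σ) {j : ℕ} {v : V} (hv : v ∈ F j) :
    v - σ (ρ v) ∈ F j :=
  (F j).sub_mem hv (h.map_mem' j _ (h.map_mem j v hv))

theorem apply_range_eq_zero (h : FlagPartialIsometry B F B' F' ρ σ) {v : V}
    (hv : v ∈ LinearMap.ker ρ) (v' : V') : B v (σ v') = 0 := by
  rw [← h.adjoint, hv, map_zero, LinearMap.zero_apply]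

theorem map_infPerp_le (h : FlagPartialIsometry B F B' F' ρ σ) (a b : ℕ) :
    (infPerp B F a b).map ρ ≤ infPerp B' F' a b := by
  rintro _ ⟨v, hv, rfl⟩
  exact ⟨h.map_mem a v hv.1, fun w hw => by rw [h.adjoint, hv.2 _ (h.map_mem' b w hw)]⟩

theorem finrank_map_infPerp_le [FiniteDimensional K V] [FiniteDimensional K V']
    (h : FlagPartialIsometry B F B' F' ρ σ) (a b : ℕ) :
    finrank K ((infPerp B F a b).map ρ) ≤ finrank K ((infPerp B' F' a b).map σ) := by
  have hfix : ((infPerp B F a b).map ρ).map (ρ ∘ₗ σ) = (infPerp B F a b).map ρ := by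
    rw [← Submodule.map_comp]
    congr 1
    exact LinearMap.ext h.map_map_map
  rw [← hfix, Submodule.map_comp]
  exact (Submodule.finrank_map_le _ _).trans
    (Submodule.finrank_mono (Submodule.map_mono (h.map_infPerp_le a b)))

theorem finrank_infPerp_inf_ker [FiniteDimensional K V] [FiniteDimensional K V']
    (h : FlagPartialIsometry B F B' F' ρ σ) (h' : FlagPartialIsometry B' F' B F σ ρ) {a b : ℕ}
    (hab : finrank K (infPerp B F a b) = finrank K (infPerp B' F' a b)) :
    finrank K ↥(infPerp B F a b ⊓ LinearMap.ker ρ) =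
      finrank K ↥(infPerp B' F' a b ⊓ LinearMap.ker σ) := by
  have hmap := (h.finrank_map_infPerp_le a b).antisymm (h'.finrank_map_infPerp_le a b)
  have hρ := finrank_map_add_finrank_inf_ker ρ (infPerp B F a b)
  have hσ := finrank_map_add_finrank_inf_ker σ (infPerp B' F' a b)
  omega

theorem infPerp_restrict (h : FlagPartialIsometry B F B' F' ρ σ) (a b : ℕ) :
    infPerp (B.domRestrict₁₂ (LinearMap.ker ρ) (LinearMap.ker ρ))
        (restrictFlag F (LinearMap.ker ρ)) a b =
      (infPerp B F a b).comap (LinearMap.ker ρ).subtype := by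
  refine le_antisymm (fun u hu => ⟨hu.1, fun w hw => ?_⟩)
    fun u hu => ⟨hu.1, fun w hw => hu.2 w hw⟩
  have hker : B u (w - σ (ρ w)) = 0 := hu.2 ⟨_, h.sub_mem_ker w⟩ (h.sub_mem hw)
  rwa [map_sub, h.apply_range_eq_zero u.2, sub_zero] at hker

theorem flaggedForm_restrict (h : FlagPartialIsometry B F B' F' ρ σ) (hB : FlaggedForm B f F) :
    FlaggedForm (B.domRestrict₁₂ (LinearMap.ker ρ) (LinearMap.ker ρ))
      (f.domRestrict (LinearMap.ker ρ)) (restrictFlag F (LinearMap.ker ρ)) where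
  symm u v := hB.symm u v
  separatingLeft u hu := by
    refine Subtype.ext (hB.separatingLeft u fun w => ?_)
    have hker : B u (w - σ (ρ w)) = 0 := hu ⟨_, h.sub_mem_ker w⟩
    rwa [map_sub, h.apply_range_eq_zero u.2, sub_zero] at hker
  apply_self u := hB.apply_self u
  zero_eq_bot := by rw [restrictFlag, hB.zero_eq_bot, Submodule.comap_bot, Submodule.ker_subtype]
  mono _ _ hij := Submodule.comap_mono (hB.mono hij)
  exists_eq_top := hB.exists_eq_top.imp fun _ hN q hq => by
    rw [restrictFlag, hN q hq, Submodule.comap_top]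

theorem infPerp_restrict_le_ker_iff (h : FlagPartialIsometry B F B' F' ρ σ) (f : V →ₗ[K] K)
    (a b : ℕ) :
    infPerp (B.domRestrict₁₂ (LinearMap.ker ρ) (LinearMap.ker ρ))
        (restrictFlag F (LinearMap.ker ρ)) a b ≤ LinearMap.ker (f.domRestrict (LinearMap.ker ρ)) ↔
      infPerp B F a b ⊓ LinearMap.ker ρ ≤ LinearMap.ker f := by
  rw [h.infPerp_restrict]
  exact ⟨fun hle v hv => hle (x := ⟨v, hv.2⟩) hv.1, fun hle u hu => hle ⟨hu, u.2⟩⟩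

theorem sameInvariantsAt_restrict [FiniteDimensional K V] [FiniteDimensional K V']
    (h : FlagPartialIsometry B F B' F' ρ σ) (h' : FlagPartialIsometry B' F' B F σ ρ) {a b : ℕ}
    (hab : finrank K (infPerp B F a b) = finrank K (infPerp B' F' a b))
    (hker : infPerp B F a b ⊓ LinearMap.ker ρ ≤ LinearMap.ker f ↔
      infPerp B' F' a b ⊓ LinearMap.ker σ ≤ LinearMap.ker f') :
    SameInvariantsAt (B.domRestrict₁₂ (LinearMap.ker ρ) (LinearMap.ker ρ))
      (f.domRestrict (LinearMap.ker ρ)) (restrictFlag F (LinearMap.ker ρ))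
      (B'.domRestrict₁₂ (LinearMap.ker σ) (LinearMap.ker σ))
      (f'.domRestrict (LinearMap.ker σ)) (restrictFlag F' (LinearMap.ker σ)) a b := by
  refine ⟨?_, ?_⟩
  · rw [h.infPerp_restrict, h'.infPerp_restrict, finrank_comap_subtype, finrank_comap_subtype,
      inf_comm, h.finrank_infPerp_inf_ker h' hab, inf_comm]
  · rw [h.infPerp_restrict_le_ker_iff, h'.infPerp_restrict_le_ker_iff, hker]

theorem flagEmbeds (h : FlagPartialIsometry B F B' F' ρ σ)
    (h' : FlagPartialIsometry B' F' B F σ ρ)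
    (hker : FlagEmbeds (B.domRestrict₁₂ (LinearMap.ker ρ) (LinearMap.ker ρ))
      (restrictFlag F (LinearMap.ker ρ))
      (B'.domRestrict₁₂ (LinearMap.ker σ) (LinearMap.ker σ))
      (restrictFlag F' (LinearMap.ker σ))) :
    FlagEmbeds B F B' F' := by
  obtain ⟨ψ, hψ, hψF⟩ := hker
  let π : V →ₗ[K] LinearMap.ker ρ :=
    (LinearMap.id - σ ∘ₗ ρ).codRestrict (LinearMap.ker ρ) h.sub_mem_ker
  refine ⟨(LinearMap.ker σ).subtype ∘ₗ ψ ∘ₗ π + ρ, fun u v => ?_, fun j v hv =>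
    (F' j).add_mem (hψF j (π v) (h.sub_mem hv)) (h.map_mem j v hv)⟩
  have hu : B' (ρ u) (ψ (π v)) = 0 := by rw [h.adjoint, (ψ (π v)).2, map_zero]
  have hv : B' (ψ (π u)) (ρ v) = 0 := h'.apply_range_eq_zero (ψ (π u)).2 v
  have hπ : B (π u) (π v) = B u v - B u (σ (ρ v)) := by
    have hleft : B (σ (ρ u)) (π v) = 0 := by rw [h'.adjoint, (π v).2, map_zero]
    have hexpand : B (π u) (π v) = B u v - B u (σ (ρ v)) - B (σ (ρ u)) (π v) := by
      simp only [π, LinearMap.codRestrict_apply, LinearMap.sub_apply, LinearMap.id_apply,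
        LinearMap.comp_apply, map_sub]
      ring
    rw [hexpand, hleft, sub_zero]
  have hψπ : B' (ψ (π u)) (ψ (π v)) = B (π u) (π v) := hψ (π u) (π v)
  calc B' (ψ (π u) + ρ u) (ψ (π v) + ρ v)
      = B' (ψ (π u)) (ψ (π v)) + B' (ρ u) (ρ v) + (B' (ψ (π u)) (ρ v) + B' (ρ u) (ψ (π v))) := by
        simp only [map_add, LinearMap.add_apply]
        ring
    _ = B u v := by rw [hu, hv, hψπ, hπ, h.adjoint]; ring

end FlagPartialIsometry

/-- The first nonzero step `V_r` of the flag, and the first `q` with `V_r ∩ V_q^⊥ = 0`. -/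
structure FlagCorner {K V : Type*} [Field K] [AddCommGroup V] [Module K V]
    (B : V →ₗ[K] V →ₗ[K] K) (F : ℕ → Submodule K V) (q r : ℕ) : Prop where
  eq_bot_iff : ∀ a, F a = ⊥ ↔ a < r
  infPerp_eq_bot_iff : ∀ b, infPerp B F r b = ⊥ ↔ q ≤ b

/-- The functional `f` is represented on `V_q` by a nonzero vector of the line `V_r ∩ V_{q-1}^⊥`. -/
def Represented {K V : Type*} [Field K] [AddCommGroup V] [Module K V]
    (B : V →ₗ[K] V →ₗ[K] K) (f : V →ₗ[K] K) (F : ℕ → Submodule K V) (q r : ℕ) : Prop :=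
  finrank K (infPerp B F r (q - 1)) = 1 ∧
    ∃ y ∈ infPerp B F r (q - 1), y ≠ 0 ∧ ∀ v ∈ F q, f v = B y v

/-- A basis `x, y` of a nondegenerate plane with Gram matrix `(ε 1; 1 0)`, placed in the flag so
that the plane splits off. -/
structure CornerPair {K V : Type*} [Field K] [AddCommGroup V] [Module K V]
    (B : V →ₗ[K] V →ₗ[K] K) (F : ℕ → Submodule K V) (q r : ℕ) (ε : K) (x y : V) : Prop where
  left_mem : x ∈ F q
  right_mem : y ∈ infPerp B F r (q - 1)
  left_left : B x x = ε
  right_left : B y x = 1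
  right_right : B y y = 0

section Corner

variable {K V V' : Type*} [Field K] [AddCommGroup V] [Module K V] [AddCommGroup V'] [Module K V']
  {B : V →ₗ[K] V →ₗ[K] K} {B' : V' →ₗ[K] V' →ₗ[K] K} {f : V →ₗ[K] K}
  {F : ℕ → Submodule K V} {F' : ℕ → Submodule K V'} {q r : ℕ}

theorem FlaggedForm.exists_flagCorner [Nontrivial V] (hB : FlaggedForm B f F) :
    ∃ q r, FlagCorner B F q r := by
  classical
  obtain ⟨N, hN⟩ := hB.exists_eq_top
  have hr : ∃ r, F r ≠ ⊥ := ⟨N, by rw [hN N le_rfl]; exact top_ne_bot⟩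
  have hq : ∃ q, infPerp B F (Nat.find hr) q = ⊥ := ⟨N, hB.infPerp_eq_bot _ (hN N le_rfl)⟩
  refine ⟨Nat.find hq, Nat.find hr, fun a => ⟨fun ha => ?_, fun ha => ?_⟩,
    fun b => ⟨Nat.find_min' hq, fun hb => ?_⟩⟩
  · by_contra! hra
    exact Nat.find_spec hr (eq_bot_mono (hB.mono hra) ha)
  · exact not_not.1 (Nat.find_min hr ha)
  · exact eq_bot_mono (infPerp_anti_right hB.mono _ hb) (Nat.find_spec hq)

theorem FlagCorner.of_finrank_eq [FiniteDimensional K V] [FiniteDimensional K V']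
    (hc : FlagCorner B F q r) (hF : F 0 = ⊥) (hF' : F' 0 = ⊥)
    (h : ∀ a b, finrank K (infPerp B F a b) = finrank K (infPerp B' F' a b)) :
    FlagCorner B' F' q r where
  eq_bot_iff a := by
    rw [← hc.eq_bot_iff, ← infPerp_eq_of_eq_bot (B := B) hF, ← infPerp_eq_of_eq_bot (B := B') hF',
      ← Submodule.finrank_eq_zero (R := K), ← h, Submodule.finrank_eq_zero]
  infPerp_eq_bot_iff b := by
    rw [← hc.infPerp_eq_bot_iff, ← Submodule.finrank_eq_zero (R := K), ← h,
      Submodule.finrank_eq_zero]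

theorem FlagCorner.step_ne_bot (hc : FlagCorner B F q r) : F r ≠ ⊥ :=
  fun h => lt_irrefl r ((hc.eq_bot_iff r).1 h)

theorem FlagCorner.infPerp_self_eq_bot (hc : FlagCorner B F q r) : infPerp B F r q = ⊥ :=
  (hc.infPerp_eq_bot_iff q).2 le_rfl

theorem FlagCorner.infPerp_of_lt (hc : FlagCorner B F q r) (a : ℕ) {b : ℕ} (hb : b < r) :
    infPerp B F a b = F a :=
  infPerp_eq_of_eq_bot ((hc.eq_bot_iff b).2 hb)

theorem FlagCorner.le (hc : FlagCorner B F q r) : r ≤ q := by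
  by_contra! hqr
  exact hc.step_ne_bot ((hc.infPerp_of_lt r hqr).symm.trans hc.infPerp_self_eq_bot)

theorem FlagCorner.pos (hc : FlagCorner B F q r) (hF : F 0 = ⊥) : 0 < r :=
  (hc.eq_bot_iff 0).1 hF

theorem FlagCorner.exists_mem_ne_zero (hc : FlagCorner B F q r) (hF : F 0 = ⊥) :
    ∃ y ∈ infPerp B F r (q - 1), y ≠ 0 := by
  refine Submodule.exists_mem_ne_zero_of_ne_bot fun h => ?_
  have hle := (hc.infPerp_eq_bot_iff _).1 h
  have hpos := hc.pos hF
  have hrq := hc.le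
  omega

theorem FlagCorner.eq_zero_of_forall_apply_eq_zero (hc : FlagCorner B F q r) {y : V} (hy : y ∈ F r)
    (h : ∀ x ∈ F q, B y x = 0) : y = 0 :=
  (Submodule.mem_bot K).1 (hc.infPerp_self_eq_bot.le ⟨hy, h⟩)

theorem FlagCorner.exists_apply_ne_zero (hc : FlagCorner B F q r) {y : V} (hy : y ∈ F r)
    (hy0 : y ≠ 0) : ∃ x ∈ F q, B y x ≠ 0 := by
  by_contra! h
  exact hy0 (hc.eq_zero_of_forall_apply_eq_zero hy h)

theorem represented_iff [FiniteDimensional K V] (hB : FlaggedForm B f F) (hc : FlagCorner B F q r) :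
    Represented B f F q r ↔ finrank K (infPerp B F r (q - 1)) = 1 ∧
      infPerp B F q r ≤ LinearMap.ker f ∧ F (q - 1) ≤ LinearMap.ker f ∧
        ¬ F q ≤ LinearMap.ker f := by
  have hmono : F (q - 1) ≤ F q := hB.mono (Nat.sub_le q 1)
  refine and_congr_right fun hL => ⟨?_, ?_⟩
  · rintro ⟨y, hy, hy0, hfy⟩
    refine ⟨fun v hv => ?_, fun v hv => ?_, fun hle => ?_⟩
    · rw [LinearMap.mem_ker, hfy v hv.1, hB.symm, hv.2 y hy.1]
    · rw [LinearMap.mem_ker, hfy v (hmono hv), hy.2 v hv]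
    · obtain ⟨x, hx, hyx⟩ := hc.exists_apply_ne_zero hy.1 hy0
      exact hyx (by rw [← hfy x hx, hle hx])
  · rintro ⟨hqr, hq1, hq⟩
    obtain ⟨y, hy, hy0⟩ := hc.exists_mem_ne_zero hB.zero_eq_bot
    obtain ⟨x, hx, hyx⟩ := hc.exists_apply_ne_zero hy.1 hy0
    have hker : F q ⊓ LinearMap.ker (B y) ≤ LinearMap.ker f := by
      rintro v ⟨hv, hyv⟩
      have hvL : v ∈ perp B (infPerp B F r (q - 1)) := fun w hw => by
        obtain ⟨c, rfl⟩ := (finrank_eq_one_iff_forall_exists_smul_eq hy hy0).1 hL w hw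
        rw [hB.symm, map_smul, LinearMap.smul_apply, hyv, smul_zero]
      obtain ⟨s, hs, t, ht, rfl⟩ := Submodule.mem_sup.1
        (perp_inf_perp_le hB.symm hB.separatingLeft _ _ hvL)
      have hsq : s ∈ F q := ((F q).add_mem_iff_left (hmono ht)).1 hv
      exact add_mem (hqr ⟨hsq, hs⟩) (hq1 ht)
    have hf (v : V) (hv : v ∈ F q) : f v = f x / B y x * B y v :=
      apply_eq_div_mul_of_inf_ker_le_ker hx hyx hker hv
    refine ⟨(f x / B y x) • y, Submodule.smul_mem _ _ hy, fun h0 => hq fun v hv => ?_,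
      fun v hv => by simpa using hf v hv⟩
    rw [LinearMap.mem_ker, hf v hv, (smul_eq_zero.1 h0).resolve_right hy0, zero_mul]

theorem represented_of_inf_ker_le_ker (hB : FlaggedForm B f F) (hc : FlagCorner B F q r)
    (h : ∀ y ∈ infPerp B F r (q - 1), F q ⊓ LinearMap.ker f ≤ LinearMap.ker (B y)) :
    Represented B f F q r := by
  obtain ⟨y, hy, hy0⟩ := hc.exists_mem_ne_zero hB.zero_eq_bot
  obtain ⟨x, hx, hyx⟩ := hc.exists_apply_ne_zero hy.1 hy0
  have hfx : f x ≠ 0 := fun hfx => hyx (h y hy ⟨hx, hfx⟩)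
  have hprop {w v : V} (hw : w ∈ infPerp B F r (q - 1)) (hv : v ∈ F q) :
      B w v = B w x / f x * f v :=
    apply_eq_div_mul_of_inf_ker_le_ker hx hfx (h w hw) hv
  refine ⟨(finrank_eq_one_iff_forall_exists_smul_eq hy hy0).2 fun w hw => ⟨B w x / B y x, ?_⟩,
    (f x / B y x) • y, Submodule.smul_mem _ _ hy, smul_ne_zero (div_ne_zero hfx hyx) hy0,
    fun v hv => ?_⟩
  · refine sub_eq_zero.1 (hc.eq_zero_of_forall_apply_eq_zero
      ((F r).sub_mem ((F r).smul_mem _ hy.1) hw.1) fun v hv => ?_)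
    rw [map_sub, map_smul, LinearMap.sub_apply, LinearMap.smul_apply, smul_eq_mul, hprop hw hv,
      hprop hy hv]
    field_simp
    ring
  · rw [map_smul, LinearMap.smul_apply, smul_eq_mul, hprop hy hv]
    field_simp

theorem Represented.exists_cornerPair (hB : FlaggedForm B f F) (hc : FlagCorner B F q r)
    (hrep : Represented B f F q r) (hL : infPerp B F r (q - 1) ≤ LinearMap.ker f) :
    ∃ x y, CornerPair B F q r 1 x y ∧ ∀ v ∈ F q, f v = B y v := by
  obtain ⟨-, y, hy, hy0, hfy⟩ := hrep
  obtain ⟨x, hx, hyx⟩ := hc.exists_apply_ne_zero hy.1 hy0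
  have hyx' : B y ((B y x)⁻¹ • x) = 1 := by rw [map_smul, smul_eq_mul, inv_mul_cancel₀ hyx]
  have hx' : (B y x)⁻¹ • x ∈ F q := (F q).smul_mem _ hx
  refine ⟨(B y x)⁻¹ • x, y, ⟨hx', hy, ?_, hyx', ?_⟩, hfy⟩
  · rw [hB.apply_self, hfy _ hx', hyx', one_pow]
  · rw [hB.apply_self, hL hy, zero_pow two_ne_zero]

theorem Represented.exists_apply_self_eq_one (hB : FlaggedForm B f F) (hc : FlagCorner B F q r)
    (hrep : Represented B f F q r) (hL : ¬ infPerp B F r (q - 1) ≤ LinearMap.ker f) :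
    ∃ y ∈ F r, B y y = 1 ∧ ∀ v ∈ F q, f v = B y v := by
  obtain ⟨hdim, y, hy, hy0, hfy⟩ := hrep
  have hy_ne : f y ≠ 0 := fun hfy0 => hL fun w hw => by
    obtain ⟨c, rfl⟩ := (finrank_eq_one_iff_forall_exists_smul_eq hy hy0).1 hdim w hw
    rw [LinearMap.mem_ker, map_smul, hfy0, smul_zero]
  have hyy : f y = f y ^ 2 := (hfy y (hB.mono hc.le hy.1)).trans (hB.apply_self y)
  have hy_one : f y = 1 := mul_left_cancel₀ hy_ne (by rw [← sq, ← hyy, mul_one])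
  exact ⟨y, hy.1, by rw [hB.apply_self, hy_one, one_pow], hfy⟩

theorem exists_cornerPair_zero (hB : FlaggedForm B f F) (hc : FlagCorner B F q r)
    (hrep : ¬ Represented B f F q r) (hL : infPerp B F r (q - 1) ≤ LinearMap.ker f) :
    ∃ x y, CornerPair B F q r 0 x y := by
  contrapose! hrep
  refine represented_of_inf_ker_le_ker hB hc fun y hy x hx => ?_
  by_contra hyx
  refine hrep ((B y x)⁻¹ • x) y ⟨(F q).smul_mem _ hx.1, hy, ?_, ?_, ?_⟩
  · rw [hB.apply_self, map_smul, hx.2, smul_zero, zero_pow two_ne_zero]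
  · rw [map_smul, smul_eq_mul, inv_mul_cancel₀ hyx]
  · rw [hB.apply_self, hL hy, zero_pow two_ne_zero]

theorem exists_apply_self_eq_one_and_not_inf_ker_le [FiniteDimensional K V]
    (hsymm : ∀ u v, B u v = B v u) (hf : ∀ v, B v v = f v ^ 2) {S : Submodule K V}
    (hS : S ⊓ perp B S = ⊥) (hSf : ¬ S ≤ LinearMap.ker f) (hdim : finrank K S ≠ 1) :
    ∃ x ∈ S, B x x = 1 ∧ ¬ S ⊓ LinearMap.ker (B x) ≤ LinearMap.ker f := by
  obtain ⟨z, hz, hfz⟩ := SetLike.not_le_iff_exists.1 hSf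
  obtain ⟨x, hx, hfx⟩ : ∃ x ∈ S, f x = 1 :=
    ⟨(f z)⁻¹ • z, S.smul_mem _ hz, by rw [map_smul, smul_eq_mul, inv_mul_cancel₀ hfz]⟩
  have hxx : B x x = 1 := by rw [hf, hfx, one_pow]
  by_cases hker : S ⊓ LinearMap.ker (B x) ≤ LinearMap.ker f
  swap
  · exact ⟨x, hx, hxx, hker⟩
  obtain ⟨u, ⟨hu, hxu⟩, hu0⟩ : ∃ u ∈ S ⊓ LinearMap.ker (B x), u ≠ 0 := by
    refine Submodule.exists_mem_ne_zero_of_ne_bot fun hbot => hdim ?_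
    have hrank := finrank_map_add_finrank_inf_ker (B x) S
    have hle := finrank_map_le_one (B x) S
    have hne : finrank K S ≠ 0 := fun h0 => hSf (by simp [Submodule.finrank_eq_zero.1 h0])
    rw [hbot, finrank_bot] at hrank
    omega
  obtain ⟨w, hw, huw⟩ : ∃ w ∈ S, B u w ≠ 0 := by
    by_contra! h
    exact hu0 ((Submodule.mem_bot K).1 (hS.le ⟨hu, h⟩))
  have hux : B u x = 0 := (hsymm u x).trans hxu
  obtain ⟨w', hw', hxw', huw'⟩ : ∃ w' ∈ S, B x w' = 0 ∧ B u w' = 1 :=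
    ⟨(B u w)⁻¹ • (w - B x w • x), S.smul_mem _ (S.sub_mem hw (S.smul_mem _ hx)),
      by simp [hxx], by simp [hux, huw]⟩
  -- `x + u` is again a unit vector, and `x - w'` is orthogonal to it but not in `ker f`.
  refine ⟨x + u, S.add_mem hx hu, ?_, fun hle => ?_⟩
  · rw [hf, map_add, hfx, hker ⟨hu, hxu⟩, add_zero, one_pow]
  · have hmem : x - w' ∈ LinearMap.ker f :=
      hle ⟨S.sub_mem hx hw', by simp [hxx, hxw', hux, huw']⟩
    rw [LinearMap.mem_ker, map_sub, hfx, hker ⟨hw', hxw'⟩, sub_zero] at hmem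
    exact one_ne_zero hmem

theorem exists_apply_self_eq_one_of_not_represented [FiniteDimensional K V]
    (hB : FlaggedForm B f F) (hc : FlagCorner B F q r) (hrep : ¬ Represented B f F q r)
    (hL : ¬ infPerp B F r (q - 1) ≤ LinearMap.ker f) :
    ∃ x ∈ F r, B x x = 1 ∧ ¬ F r ⊓ LinearMap.ker (B x) ≤ LinearMap.ker f := by
  have hrq : r = q := by
    by_contra hne
    refine hL fun y hy => pow_eq_zero_iff two_ne_zero |>.1 ?_
    rw [← hB.apply_self, hy.2 y (hB.mono (Nat.le_sub_one_of_lt (hc.le.lt_of_ne hne)) hy.1)]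
  subst hrq
  have hpred : r - 1 < r := Nat.sub_lt (hc.pos hB.zero_eq_bot) one_pos
  rw [hc.infPerp_of_lt r hpred] at hL
  refine exists_apply_self_eq_one_and_not_inf_ker_le hB.symm hB.apply_self hc.infPerp_self_eq_bot
    hL fun hdim => hrep ((represented_iff hB hc).2 ⟨?_, ?_, ?_, hL⟩)
  · rwa [hc.infPerp_of_lt r hpred]
  · exact hc.infPerp_self_eq_bot.le.trans bot_le
  · exact ((hc.eq_bot_iff _).2 hpred).le.trans bot_le

end Corner

/-- The map sending `x` to `x'` and `y` to `y'`, for a pair `x, y` with Gram matrix `(ε 1; 1 0)`,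
and vanishing on the orthogonal complement of the pair. -/
def planeMap {K V V' : Type*} [Field K] [AddCommGroup V] [Module K V]
    [AddCommGroup V'] [Module K V'] (B : V →ₗ[K] V →ₗ[K] K) (ε : K) (x y : V) (x' y' : V') :
    V →ₗ[K] V' :=
  (B y).smulRight x' + (B x - ε • B y).smulRight y'

/-- A nonzero partial isometry such that passing to the kernels of `ρ` and `σ` preserves equality
of the truth values of `V_a ∩ V_b^⊥ ⊆ ker f`. -/
structure ReducingIsometry {K V V' : Type*} [Field K] [AddCommGroup V] [Module K V]
    [AddCommGroup V'] [Module K V'] (B : V →ₗ[K] V →ₗ[K] K) (f : V →ₗ[K] K)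
    (F : ℕ → Submodule K V) (B' : V' →ₗ[K] V' →ₗ[K] K) (f' : V' →ₗ[K] K)
    (F' : ℕ → Submodule K V') (ρ : V →ₗ[K] V') (σ : V' →ₗ[K] V) : Prop
    extends FlagPartialIsometry B F B' F' ρ σ where
  ne_zero : ρ ≠ 0
  inf_ker_le_ker_iff : ∀ a b, infPerp B F a b ⊓ LinearMap.ker ρ ≤ LinearMap.ker f ↔
    infPerp B' F' a b ⊓ LinearMap.ker σ ≤ LinearMap.ker f'

section Reduction

variable {K V V' : Type*} [Field K] [AddCommGroup V] [Module K V] [AddCommGroup V'] [Module K V']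
  {B : V →ₗ[K] V →ₗ[K] K} {B' : V' →ₗ[K] V' →ₗ[K] K} {f : V →ₗ[K] K} {f' : V' →ₗ[K] K}
  {F : ℕ → Submodule K V} {F' : ℕ → Submodule K V'} {q r : ℕ} {ρ : V →ₗ[K] V'} {σ : V' →ₗ[K] V}

theorem FlagCorner.map_mem (hc : FlagCorner B F q r) (hF' : Monotone F') (g : V →ₗ[K] V') {j : ℕ}
    {v : V} (hv : v ∈ F j) (hg : g v ∈ F' r) : g v ∈ F' j := by
  rcases lt_or_ge j r with hj | hj
  · rw [(hc.eq_bot_iff j).2 hj, Submodule.mem_bot] at hv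
    rw [hv, map_zero]
    exact zero_mem _
  · exact hF' hj hg

theorem flagPartialIsometry_line (hB : FlaggedForm B f F) (hB' : FlaggedForm B' f' F')
    (hc : FlagCorner B F q r) (hc' : FlagCorner B' F' q r) {x : V} {x' : V'} (hx : x ∈ F r)
    (hx' : x' ∈ F' r) (hxx : B x x = 1) (hxx' : B' x' x' = 1) :
    FlagPartialIsometry B F B' F' ((B x).smulRight x') ((B' x').smulRight x) where
  adjoint v v' := by
    simp only [LinearMap.smulRight_apply, map_smul, LinearMap.smul_apply, smul_eq_mul]
    rw [hB.symm v x, mul_comm]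
  map_map_map v := by simp [hxx, hxx']
  map_map_map' v' := by simp [hxx, hxx']
  map_mem _ _ hv := hc.map_mem hB'.mono _ hv ((F' r).smul_mem _ hx')
  map_mem' _ _ hv' := hc'.map_mem hB.mono _ hv' ((F r).smul_mem _ hx)

theorem ne_zero_of_apply_self_eq_one {x : V} (hxx : B x x = 1) : x ≠ 0 := fun h0 => by
  simp [h0] at hxx

theorem line_ne_zero {x : V} {x' : V'} (hxx : B x x = 1) (hx' : x' ≠ 0) :
    (B x).smulRight x' ≠ 0 := fun h0 => hx' <| by
  simpa [hxx] using LinearMap.congr_fun h0 x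

theorem range_line_le (g : V' →ₗ[K] K) {S : Submodule K V} {x : V} (hx : x ∈ S) :
    LinearMap.range (g.smulRight x) ≤ S := by
  rintro _ ⟨v, rfl⟩
  exact S.smul_mem _ hx

theorem planeMap_apply (ε : K) (x y : V) (x' y' : V') (v : V) :
    planeMap B ε x y x' y' v = B y v • x' + (B x v - ε * B y v) • y' := rfl

theorem range_planeMap_le (ε : K) (x' y' : V') {x y : V} {S : Submodule K V} (hx : x ∈ S)
    (hy : y ∈ S) : LinearMap.range (planeMap B' ε x' y' x y) ≤ S := by
  rintro _ ⟨v, rfl⟩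
  exact S.add_mem (S.smul_mem _ hx) (S.smul_mem _ hy)

namespace CornerPair

variable {ε : K} {x y : V} {x' y' : V'}

theorem planeMap_left (p : CornerPair B F q r ε x y) (x' y' : V') :
    planeMap B ε x y x' y' x = x' := by
  simp [planeMap_apply, p.left_left, p.right_left]

theorem planeMap_right (p : CornerPair B F q r ε x y) (hsymm : ∀ u v, B u v = B v u)
    (x' y' : V') : planeMap B ε x y x' y' y = y' := by
  simp [planeMap_apply, p.right_right, hsymm x y, p.right_left]

theorem planeMap_ne_zero (p : CornerPair B F q r ε x y) (p' : CornerPair B' F' q r ε x' y') :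
    planeMap B ε x y x' y' ≠ 0 := fun h0 => by
  have hx' : x' = 0 := by rw [← p.planeMap_left x' y', h0, LinearMap.zero_apply]
  simpa [hx'] using p'.right_left

theorem planeMap_planeMap_planeMap (p : CornerPair B F q r ε x y)
    (p' : CornerPair B' F' q r ε x' y') (hsymm : ∀ u v, B u v = B v u)
    (hsymm' : ∀ u v, B' u v = B' v u) (v : V) :
    planeMap B ε x y x' y' (planeMap B' ε x' y' x y (planeMap B ε x y x' y' v)) =
      planeMap B ε x y x' y' v := by
  conv_lhs => rw [planeMap_apply ε x y x' y' v]
  simp only [map_add, map_smul, p.planeMap_left, p.planeMap_right hsymm, p'.planeMap_left,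
    p'.planeMap_right hsymm']
  rfl

theorem planeMap_mem (p : CornerPair B F q r ε x y) (p' : CornerPair B' F' q r ε x' y')
    (hF : Monotone F) (hF' : Monotone F') (hc : FlagCorner B F q r) {j : ℕ} {v : V}
    (hv : v ∈ F j) : planeMap B ε x y x' y' v ∈ F' j := by
  rcases lt_or_ge j q with hj | hj
  · refine hc.map_mem hF' _ hv ?_
    rw [planeMap_apply, p.right_mem.2 v (hF (Nat.le_sub_one_of_lt hj) hv), zero_smul, zero_add]
    exact (F' r).smul_mem _ p'.right_mem.1
  · exact hF' hj (range_planeMap_le ε x y p'.left_mem (hF' hc.le p'.right_mem.1) ⟨v, rfl⟩)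

theorem flagPartialIsometry (p : CornerPair B F q r ε x y) (p' : CornerPair B' F' q r ε x' y')
    (hB : FlaggedForm B f F) (hB' : FlaggedForm B' f' F') (hc : FlagCorner B F q r)
    (hc' : FlagCorner B' F' q r) :
    FlagPartialIsometry B F B' F' (planeMap B ε x y x' y') (planeMap B' ε x' y' x y) where
  adjoint v v' := by
    simp only [planeMap_apply, map_add, map_smul, LinearMap.add_apply, LinearMap.smul_apply,
      smul_eq_mul, hB.symm v]
    ring
  map_map_map := p.planeMap_planeMap_planeMap p' hB.symm hB'.symm
  map_map_map' := p'.planeMap_planeMap_planeMap p hB'.symm hB.symm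
  map_mem _ _ hv := p.planeMap_mem p' hB.mono hB'.mono hc hv
  map_mem' _ _ hv' := p'.planeMap_mem p hB'.mono hB.mono hc' hv'

end CornerPair

namespace FlagPartialIsometry

theorem sub_mem_infPerp (h : FlagPartialIsometry B F B' F' ρ σ)
    (h' : FlagPartialIsometry B' F' B F σ ρ) {a b : ℕ} {v : V} (hv : v ∈ infPerp B F a b) :
    v - σ (ρ v) ∈ infPerp B F a b :=
  Submodule.sub_mem _ hv
    (h'.map_infPerp_le a b ⟨ρ v, h.map_infPerp_le a b ⟨v, hv, rfl⟩, rfl⟩)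

theorem infPerp_inf_ker_le_ker_iff_of_range_le (h : FlagPartialIsometry B F B' F' ρ σ)
    (h' : FlagPartialIsometry B' F' B F σ ρ) (hσ : LinearMap.range σ ≤ LinearMap.ker f)
    (a b : ℕ) :
    infPerp B F a b ⊓ LinearMap.ker ρ ≤ LinearMap.ker f ↔ infPerp B F a b ≤ LinearMap.ker f := by
  refine ⟨fun hle v hv => ?_, inf_le_left.trans⟩
  have hsub : f (v - σ (ρ v)) = 0 := hle ⟨h.sub_mem_infPerp h' hv, h.sub_mem_ker v⟩
  have hrange : f (σ (ρ v)) = 0 := hσ ⟨ρ v, rfl⟩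
  rwa [map_sub, hrange, sub_zero] at hsub

theorem infPerp_inf_ker_le_ker_iff_of_not_le (h : FlagPartialIsometry B F B' F' ρ σ)
    (hc : FlagCorner B F q r) (hB : FlaggedForm B f F) (hB' : B'.SeparatingLeft)
    (hσ : LinearMap.range σ ≤ F r) (hr : ¬ F r ⊓ LinearMap.ker ρ ≤ LinearMap.ker f) (a b : ℕ) :
    infPerp B F a b ⊓ LinearMap.ker ρ ≤ LinearMap.ker f ↔ infPerp B F a b ≤ LinearMap.ker f := by
  refine ⟨fun hle => ?_, inf_le_left.trans⟩
  rcases lt_or_ge a r with ha | ha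
  · exact (inf_le_left.trans ((hc.eq_bot_iff a).2 ha).le).trans bot_le
  rcases lt_or_ge b r with hb | hb
  · rw [hc.infPerp_of_lt a hb] at hle
    exact absurd ((inf_le_inf_right _ (hB.mono ha)).trans hle) hr
  · exact fun v hv => hle ⟨hv, hB' _ fun w => by
      rw [h.adjoint, hv.2 _ (hB.mono hb (hσ ⟨w, rfl⟩))]⟩

theorem infPerp_inf_ker_le_ker_iff_of_represented [FiniteDimensional K V]
    (h : FlagPartialIsometry B F B' F' ρ σ) (h' : FlagPartialIsometry B' F' B F σ ρ)
    (hB : FlaggedForm B f F) (hc : FlagCorner B F q r) (hσ : LinearMap.range σ ≤ F q) {y : V}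
    (hy : y ∈ F r) (hyσ : y ∈ LinearMap.range σ) (hfy : ∀ v ∈ F q, f v = B y v) (a b : ℕ) :
    infPerp B F a b ⊓ LinearMap.ker ρ ≤ LinearMap.ker f ↔
      infPerp B F a (max b r) ≤ LinearMap.ker f := by
  obtain ⟨y', rfl⟩ := hyσ
  refine ⟨fun hle v hv => ?_, fun hle v hv => ?_⟩
  · have hsub : f (v - σ (ρ v)) = 0 :=
      hle ⟨h.sub_mem_infPerp h' (infPerp_anti_right hB.mono a (le_max_left b r) hv),
        h.sub_mem_ker v⟩
    have hrange : f (σ (ρ v)) = 0 := by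
      rw [hfy _ (hσ ⟨ρ v, rfl⟩), h'.adjoint, h.map_map_map, ← h'.adjoint, hB.symm,
        hv.2 _ (hB.mono (le_max_right b r) hy)]
    rwa [map_sub, hrange, sub_zero] at hsub
  · have hyv : B (σ y') v = 0 := by rw [hB.symm, h.apply_range_eq_zero hv.2]
    rcases le_or_gt r b with hb | hb
    · exact hle (by rw [max_eq_left hb]; exact hv.1)
    rcases le_total a q with ha | ha
    · exact (hfy v (hB.mono ha hv.1.1)).trans hyv
    -- Modulo `V_r^⊥` every vector lies in `V_q`, where `f` is represented by `σ y'`.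
    have htop : perp B (F r) ⊔ F q = ⊤ := by
      rw [eq_top_iff, ← perp_bot (B := B), ← hc.infPerp_self_eq_bot]
      exact perp_inf_perp_le hB.symm hB.separatingLeft _ _
    obtain ⟨s, hs, t, ht, rfl⟩ := Submodule.mem_sup.1 (htop.ge (Submodule.mem_top (x := v)))
    have hsa : s ∈ F a := ((F a).add_mem_iff_left (hB.mono ha ht)).1 hv.1.1
    have hfs : f s = 0 := hle ⟨hsa, by rwa [max_eq_right hb.le]⟩
    have hys : B (σ y') s = 0 := by rw [hB.symm, hs _ hy]
    rw [LinearMap.mem_ker, map_add, hfs, zero_add, hfy t ht]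
    rwa [map_add, hys, zero_add] at hyv

end FlagPartialIsometry

theorem exists_reducingIsometry_of_represented [FiniteDimensional K V] [FiniteDimensional K V']
    (hB : FlaggedForm B f F) (hB' : FlaggedForm B' f' F') (hc : FlagCorner B F q r)
    (hc' : FlagCorner B' F' q r) (hinv : ∀ a b, SameInvariantsAt B f F B' f' F' a b)
    (hrep : Represented B f F q r) (hrep' : Represented B' f' F' q r) :
    ∃ ρ σ, ReducingIsometry B f F B' f' F' ρ σ := by
  by_cases hL : infPerp B F r (q - 1) ≤ LinearMap.ker f
  · obtain ⟨x, y, p, hfy⟩ := hrep.exists_cornerPair hB hc hL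
    obtain ⟨x', y', p', hfy'⟩ := hrep'.exists_cornerPair hB' hc' ((hinv _ _).2.1 hL)
    have h := p.flagPartialIsometry p' hB hB' hc hc'
    have h' := h.symm hB.symm hB'.symm
    refine ⟨_, _, h, p.planeMap_ne_zero p', fun a b => ?_⟩
    rw [h.infPerp_inf_ker_le_ker_iff_of_represented h' hB hc
        (range_planeMap_le 1 x' y' p.left_mem (hB.mono hc.le p.right_mem.1)) p.right_mem.1
        ⟨y', p'.planeMap_right hB'.symm x y⟩ hfy,
      h'.infPerp_inf_ker_le_ker_iff_of_represented h hB' hc'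
        (range_planeMap_le 1 x y p'.left_mem (hB'.mono hc'.le p'.right_mem.1)) p'.right_mem.1
        ⟨y, p.planeMap_right hB.symm x' y'⟩ hfy', (hinv _ _).2]
  · obtain ⟨y, hy, hyy, hfy⟩ := hrep.exists_apply_self_eq_one hB hc hL
    obtain ⟨y', hy', hyy', hfy'⟩ :=
      hrep'.exists_apply_self_eq_one hB' hc' (mt (hinv _ _).2.2 hL)
    have h := flagPartialIsometry_line hB hB' hc hc' hy hy' hyy hyy'
    have h' := h.symm hB.symm hB'.symm
    refine ⟨_, _, h, line_ne_zero hyy (ne_zero_of_apply_self_eq_one hyy'), fun a b => ?_⟩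
    rw [h.infPerp_inf_ker_le_ker_iff_of_represented h' hB hc
        (range_line_le _ (hB.mono hc.le hy)) hy ⟨y', by simp [hyy']⟩ hfy,
      h'.infPerp_inf_ker_le_ker_iff_of_represented h hB' hc'
        (range_line_le _ (hB'.mono hc'.le hy')) hy' ⟨y, by simp [hyy]⟩ hfy', (hinv _ _).2]

theorem CornerPair.range_planeMap_le_ker {x y : V} (p : CornerPair B F q r 0 x y)
    (hf : ∀ v, B v v = f v ^ 2) (x' y' : V') :
    LinearMap.range (planeMap B' 0 x' y' x y) ≤ LinearMap.ker f :=
  range_planeMap_le 0 x' y' (sq_eq_zero_iff.1 ((hf x).symm.trans p.left_left))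
    (sq_eq_zero_iff.1 ((hf y).symm.trans p.right_right))

theorem exists_reducingIsometry_of_not_represented [FiniteDimensional K V]
    [FiniteDimensional K V'] (hB : FlaggedForm B f F) (hB' : FlaggedForm B' f' F')
    (hc : FlagCorner B F q r) (hc' : FlagCorner B' F' q r)
    (hinv : ∀ a b, SameInvariantsAt B f F B' f' F' a b)
    (hrep : ¬ Represented B f F q r) (hrep' : ¬ Represented B' f' F' q r) :
    ∃ ρ σ, ReducingIsometry B f F B' f' F' ρ σ := by
  by_cases hL : infPerp B F r (q - 1) ≤ LinearMap.ker f
  · obtain ⟨x, y, p⟩ := exists_cornerPair_zero hB hc hrep hL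
    obtain ⟨x', y', p'⟩ := exists_cornerPair_zero hB' hc' hrep' ((hinv _ _).2.1 hL)
    have h := p.flagPartialIsometry p' hB hB' hc hc'
    have h' := h.symm hB.symm hB'.symm
    refine ⟨_, _, h, p.planeMap_ne_zero p', fun a b => ?_⟩
    rw [h.infPerp_inf_ker_le_ker_iff_of_range_le h' (p.range_planeMap_le_ker hB.apply_self x' y'),
      h'.infPerp_inf_ker_le_ker_iff_of_range_le h (p'.range_planeMap_le_ker hB'.apply_self x y),
      (hinv _ _).2]
  · obtain ⟨x, hx, hxx, hker⟩ := exists_apply_self_eq_one_of_not_represented hB hc hrep hL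
    obtain ⟨x', hx', hxx', hker'⟩ :=
      exists_apply_self_eq_one_of_not_represented hB' hc' hrep' (mt (hinv _ _).2.2 hL)
    have hx0 := ne_zero_of_apply_self_eq_one hxx
    have hx'0 := ne_zero_of_apply_self_eq_one hxx'
    have h := flagPartialIsometry_line hB hB' hc hc' hx hx' hxx hxx'
    have h' := h.symm hB.symm hB'.symm
    refine ⟨_, _, h, line_ne_zero hxx hx'0, fun a b => ?_⟩
    rw [h.infPerp_inf_ker_le_ker_iff_of_not_le hc hB hB'.separatingLeft (range_line_le _ hx)
        (by rwa [ker_smulRight (B x) hx'0]),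
      h'.infPerp_inf_ker_le_ker_iff_of_not_le hc' hB' hB.separatingLeft (range_line_le _ hx')
        (by rwa [ker_smulRight (B' x') hx0]), (hinv _ _).2]

theorem represented_iff_represented [FiniteDimensional K V] [FiniteDimensional K V']
    (hB : FlaggedForm B f F) (hB' : FlaggedForm B' f' F') (hc : FlagCorner B F q r)
    (hc' : FlagCorner B' F' q r) (hinv : ∀ a b, SameInvariantsAt B f F B' f' F' a b) :
    Represented B f F q r ↔ Represented B' f' F' q r := by
  have step_le (a : ℕ) : F a ≤ LinearMap.ker f ↔ F' a ≤ LinearMap.ker f' := by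
    rw [← hB.infPerp_zero_right, ← hB'.infPerp_zero_right, (hinv a 0).2]
  rw [represented_iff hB hc, represented_iff hB' hc', (hinv r (q - 1)).1, (hinv q r).2,
    step_le, step_le]

theorem exists_reducingIsometry [FiniteDimensional K V] [FiniteDimensional K V'] [Nontrivial V]
    (hB : FlaggedForm B f F) (hB' : FlaggedForm B' f' F')
    (hinv : ∀ a b, SameInvariantsAt B f F B' f' F' a b) :
    ∃ ρ σ, ReducingIsometry B f F B' f' F' ρ σ := by
  obtain ⟨q, r, hc⟩ := hB.exists_flagCorner
  have hc' : FlagCorner B' F' q r :=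
    hc.of_finrank_eq hB.zero_eq_bot hB'.zero_eq_bot fun a b => (hinv a b).1
  have hiff := represented_iff_represented hB hB' hc hc' hinv
  by_cases hrep : Represented B f F q r
  · exact exists_reducingIsometry_of_represented hB hB' hc hc' hinv hrep (hiff.1 hrep)
  · exact exists_reducingIsometry_of_not_represented hB hB' hc hc' hinv hrep (mt hiff.2 hrep)

end Reduction

theorem FlaggedForm.flagEmbeds {K V V' : Type*} [Field K] [AddCommGroup V] [Module K V]
    [AddCommGroup V'] [Module K V'] [FiniteDimensional K V] [FiniteDimensional K V']
    {B : V →ₗ[K] V →ₗ[K] K} {B' : V' →ₗ[K] V' →ₗ[K] K} {f : V →ₗ[K] K} {f' : V' →ₗ[K] K}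
    {F : ℕ → Submodule K V} {F' : ℕ → Submodule K V'}
    (hB : FlaggedForm B f F) (hB' : FlaggedForm B' f' F')
    (hinv : ∀ a b, SameInvariantsAt B f F B' f' F' a b) : FlagEmbeds B F B' F' := by
  rcases subsingleton_or_nontrivial V with _ | _
  · refine ⟨0, fun u v => ?_, fun j v _ => zero_mem _⟩
    rw [Subsingleton.elim u 0]
    simp
  · obtain ⟨ρ, σ, h⟩ := exists_reducingIsometry hB hB' hinv
    have h' := h.symm hB.symm hB'.symm
    exact h.flagEmbeds h' (flagEmbeds (h.flaggedForm_restrict hB) (h'.flaggedForm_restrict hB')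
      fun a b => h.sameInvariantsAt_restrict h' (hinv a b).1 (h.inf_ker_le_ker_iff a b))
termination_by finrank K V
decreasing_by exact Submodule.finrank_lt (mt LinearMap.ker_eq_top.1 h.ne_zero)

section Equivalence

variable {K V V' : Type*} [Field K] [AddCommGroup V] [Module K V] [AddCommGroup V'] [Module K V']
  {B : V →ₗ[K] V →ₗ[K] K} {B' : V' →ₗ[K] V' →ₗ[K] K} {f : V →ₗ[K] K} {f' : V' →ₗ[K] K}
  {F : ℕ → Submodule K V} {F' : ℕ → Submodule K V'}

theorem FlagEmbeds.exists_linearEquiv [FiniteDimensional K V] [FiniteDimensional K V']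
    (h : FlagEmbeds B F B' F') (hB : B.SeparatingLeft) (hF : ∃ N, ∀ q, N ≤ q → F q = ⊤)
    (hF' : ∃ N, ∀ q, N ≤ q → F' q = ⊤) (hdim : ∀ j, finrank K (F j) = finrank K (F' j)) :
    ∃ φ : V ≃ₗ[K] V', (∀ j, (F j).map (φ : V →ₗ[K] V') = F' j) ∧
      ∀ u v, B' (φ u) (φ v) = B u v := by
  obtain ⟨ψ, hψ, hψF⟩ := h
  obtain ⟨N, hN⟩ := hF
  obtain ⟨N', hN'⟩ := hF'
  have hinj : Function.Injective ψ := LinearMap.ker_eq_bot.1 <| LinearMap.ker_eq_bot'.2 fun v hv =>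
    hB v fun w => by rw [← hψ, hv, map_zero, LinearMap.zero_apply]
  have hVV' : finrank K V = finrank K V' := by
    rw [← finrank_top K V, ← hN _ (le_max_left N N'), hdim, hN' _ (le_max_right N N'), finrank_top]
  refine ⟨LinearEquiv.ofInjectiveOfFinrankEq ψ hinj hVV', fun j => ?_, hψ⟩
  refine Submodule.eq_of_le_of_finrank_eq (Submodule.map_le_iff_le_comap.2 (hψF j)) ?_
  exact (LinearEquiv.finrank_map_eq _ _).trans (hdim j)

theorem map_infPerp_of_isometry (φ : V ≃ₗ[K] V')
    (hφF : ∀ j, (F j).map (φ : V →ₗ[K] V') = F' j) (hφ : ∀ u v, B' (φ u) (φ v) = B u v)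
    (a b : ℕ) : (infPerp B F a b).map (φ : V →ₗ[K] V') = infPerp B' F' a b := by
  rw [infPerp, infPerp, Submodule.map_inf _ φ.injective, hφF]
  congr 1
  ext v'
  obtain ⟨v, rfl⟩ := φ.surjective v'
  rw [← hφF b, Submodule.mem_map_equiv, LinearEquiv.symm_apply_apply]
  exact ⟨fun h _ ⟨w, hw, hw'⟩ => hw' ▸ (hφ v w).trans (h w hw),
    fun h w hw => (hφ v w).symm.trans (h _ ⟨w, hw, rfl⟩)⟩

theorem sameInvariantsAt_of_isometry (hf : ∀ v, B v v = f v ^ 2) (hf' : ∀ v, B' v v = f' v ^ 2)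
    (φ : V ≃ₗ[K] V') (hφF : ∀ j, (F j).map (φ : V →ₗ[K] V') = F' j)
    (hφ : ∀ u v, B' (φ u) (φ v) = B u v) (a b : ℕ) : SameInvariantsAt B f F B' f' F' a b := by
  have hker (v : V) : f' (φ v) = 0 ↔ f v = 0 := by
    rw [← sq_eq_zero_iff, ← hf', hφ, hf, sq_eq_zero_iff]
  rw [SameInvariantsAt, ← map_infPerp_of_isometry φ hφF hφ]
  refine ⟨(LinearEquiv.finrank_map_eq φ _).symm, ?_⟩
  rw [Submodule.map_le_iff_le_comap]
  exact forall₂_congr fun v _ => (hker v).symm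

theorem FlaggedForm.eq_ker (hB : FlaggedForm B f F) {S : Submodule K V}
    (hS : ∀ v, v ∈ S ↔ B v v = 0) : S = LinearMap.ker f :=
  SetLike.ext fun v => by rw [hS, hB.apply_self, sq_eq_zero_iff, LinearMap.mem_ker]

theorem exists_linearMap_sq_eq [CharP K 2] [PerfectField K] (hsymm : ∀ u v, B u v = B v u) :
    ∃ f : V →ₗ[K] K, ∀ v, B v v = f v ^ 2 := by
  refine ⟨⟨⟨fun v => (frobeniusEquiv K 2).symm (B v v), fun u v => ?_⟩, fun c v => ?_⟩,
    fun v => (frobeniusEquiv_symm_pow_p K 2 _).symm⟩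
  · have hcross : B (u + v) (u + v) = B u u + B v v := by
      rw [map_add, map_add, LinearMap.add_apply, LinearMap.add_apply, hsymm v u]
      linear_combination CharTwo.add_self_eq_zero (B u v)
    rw [hcross, map_add]
  · have hsmul : B (c • v) (c • v) = c ^ 2 * B v v := by
      rw [map_smul, map_smul, LinearMap.smul_apply, smul_eq_mul, smul_eq_mul]
      ring
    change (frobeniusEquiv K 2).symm (B (c • v) (c • v)) = c * (frobeniusEquiv K 2).symm (B v v)
    rw [hsmul, map_mul, frobeniusEquiv_symm_pow]

end Equivalence

theorem statement11_general {K V V' : Type*} [Field K]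
    [AddCommGroup V] [Module K V] [AddCommGroup V'] [Module K V']
    [FiniteDimensional K V] [FiniteDimensional K V']
    {B : V →ₗ[K] V →ₗ[K] K} {B' : V' →ₗ[K] V' →ₗ[K] K} {f : V →ₗ[K] K} {f' : V' →ₗ[K] K}
    {Vf : ℕ → Submodule K V} {Vf' : ℕ → Submodule K V'}
    (hB : FlaggedForm B f Vf) (hB' : FlaggedForm B' f' Vf')
    {V0 : Submodule K V} (hV0 : ∀ v : V, v ∈ V0 ↔ B v v = 0)
    {V0' : Submodule K V'} (hV0' : ∀ v : V', v ∈ V0' ↔ B' v v = 0) :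
    (∃ φ : V ≃ₗ[K] V',
        (∀ j : ℕ, Submodule.map (φ : V →ₗ[K] V') (Vf j) = Vf' j) ∧
        ∀ u v : V, B' (φ u) (φ v) = B u v) ↔
      (∀ q r : ℕ, 1 ≤ q → 1 ≤ r →
        nqr B Vf q r = nqr B' Vf' q r ∧
        nqr1 B Vf V0 q r = nqr1 B' Vf' V0' q r) := by
  rw [hB.eq_ker hV0, hB'.eq_ker hV0', ← hB.sameInvariantsAt_iff hB']
  refine ⟨fun ⟨φ, hφF, hφ⟩ => sameInvariantsAt_of_isometry hB.apply_self hB'.apply_self φ hφF hφ,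
    fun hinv => (hB.flagEmbeds hB' hinv).exists_linearEquiv hB.separatingLeft hB.exists_eq_top
      hB'.exists_eq_top fun j => ?_⟩
  rw [← hB.infPerp_zero_right, ← hB'.infPerp_zero_right, (hinv j 0).1]

/-- Theorem 1.1(2): two triples (V, 𝓕, b) and (V', 𝓕', b') are
equivalent (there is a linear isomorphism carrying the flag to the flag and the
form to the form) if and only if n_qr = n'_qr and n_qr^1 = n'_qr^1 for all
q, r ≥ 1. -/
theorem statement11 {K V V' : Type*} [Field K]
    [AddCommGroup V] [Module K V] [AddCommGroup V'] [Module K V']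
    [FiniteDimensional K V] [FiniteDimensional K V'] [CharP K 2] [PerfectField K]
    (B : V →ₗ[K] V →ₗ[K] K) (B' : V' →ₗ[K] V' →ₗ[K] K)
    (hsymm : ∀ u v : V, B u v = B v u)
    (hsymm' : ∀ u v : V', B' u v = B' v u)
    (hnd : ∀ v : V, (∀ w : V, B v w = 0) → v = 0)
    (hnd' : ∀ v : V', (∀ w : V', B' v w = 0) → v = 0)
    (hna : ∃ v : V, B v v ≠ 0) (hna' : ∃ v : V', B' v v ≠ 0)
    (Vf : ℕ → Submodule K V) (hbot : Vf 0 = ⊥) (hmono : Monotone Vf)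
    (htop : ∃ N, ∀ q, N ≤ q → Vf q = ⊤)
    (Vf' : ℕ → Submodule K V') (hbot' : Vf' 0 = ⊥) (hmono' : Monotone Vf')
    (htop' : ∃ N, ∀ q, N ≤ q → Vf' q = ⊤)
    (V0 : Submodule K V) (hV0 : ∀ v : V, v ∈ V0 ↔ B v v = 0)
    (V0' : Submodule K V') (hV0' : ∀ v : V', v ∈ V0' ↔ B' v v = 0) :
    (∃ φ : V ≃ₗ[K] V',
        (∀ j : ℕ, Submodule.map (φ : V →ₗ[K] V') (Vf j) = Vf' j) ∧
        ∀ u v : V, B' (φ u) (φ v) = B u v) ↔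
      (∀ q r : ℕ, 1 ≤ q → 1 ≤ r →
        nqr B Vf q r = nqr B' Vf' q r ∧
        nqr1 B Vf V0 q r = nqr1 B' Vf' V0' q r) := by
  obtain ⟨f, hf⟩ := exists_linearMap_sq_eq hsymm
  obtain ⟨f', hf'⟩ := exists_linearMap_sq_eq hsymm'
  exact statement11_general ⟨hsymm, hnd, hf, hbot, hmono, htop⟩
    ⟨hsymm', hnd', hf', hbot', hmono', htop'⟩ hV0 hV0'
end

section
/- Under the map A ↦ b_A, where b_A(u,v) = b(Au,v), the image of the derived subalgebra s(V,b)^{(1)} = [s(V,b), s(V,b)] is exactly the space of all alternating bilinear forms on V (bilinear forms ω with ω(v,v) = 0 for all v ∈ V). -/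
open Module

/-- The Lie algebra `s(V,b)` of endomorphisms preserving the bilinear form `b`
(in characteristic 2, self-adjoint endomorphisms), as a subspace of `End K V`. -/
def sAdj {K V : Type*} [Field K] [AddCommGroup V] [Module K V]
    (B : V →ₗ[K] V →ₗ[K] K) : Submodule K (Module.End K V) where
  carrier := {A | ∀ u v : V, B (A u) v = B u (A v)}
  add_mem' := by
    intro A C hA hC u v
    simp [LinearMap.add_apply, map_add, hA u v, hC u v]
  zero_mem' := by
    intro u v
    simp
  smul_mem' := by
    intro c A hA u v
    simp [LinearMap.smul_apply, map_smul, hA u v]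

/-- The derived subalgebra `s(V,b)⁽¹⁾ = [s(V,b), s(V,b)]`, spanned by
commutators of elements of `s(V,b)`. -/
def sAdjDerived {K V : Type*} [Field K] [AddCommGroup V] [Module K V]
    (B : V →ₗ[K] V →ₗ[K] K) : Submodule K (Module.End K V) :=
  Submodule.span K
    {C : Module.End K V | ∃ A₁ ∈ sAdj B, ∃ A₂ ∈ sAdj B, C = A₁ * A₂ - A₂ * A₁}

/-!
For symmetric `B`, the operators `x ↦ B u x • u` are self-adjoint, and the form attached to the
commutator of two of them is `B u v • (B u ∧ B v)`. If `B u v = 0` but `B u w ≠ 0` for some `w`,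
then `B u ∧ B v` is the sum of `B u ∧ B (v - w)` and `B u ∧ B w`, to which this applies.
By nondegeneracy every functional is some `B u`, and wedges of functionals span the alternating
forms. Conversely, the form attached to a commutator of self-adjoint operators is alternating
because `B (A₁ (A₂ v)) v = B (A₂ v) (A₁ v)` is symmetric in `A₁` and `A₂`.
-/

section Wedge

variable {R M : Type*} [CommRing R] [AddCommGroup M] [Module R M]

/-- The wedge product `φ ∧ ψ` of two linear functionals, encoded as the bilinear form
`(x, y) ↦ φ x * ψ y - ψ x * φ y`. -/
def wedgeForm (φ ψ : Dual R M) : M →ₗ[R] M →ₗ[R] R :=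
  φ.smulRight ψ - ψ.smulRight φ

@[simp]
theorem wedgeForm_apply (φ ψ : Dual R M) (x y : M) :
    wedgeForm φ ψ x y = φ x * ψ y - ψ x * φ y :=
  rfl

theorem wedgeForm_zero_left (ψ : Dual R M) : wedgeForm 0 ψ = 0 := by
  ext x y
  simp

theorem wedgeForm_add_right (φ ψ χ : Dual R M) :
    wedgeForm φ (ψ + χ) = wedgeForm φ ψ + wedgeForm φ χ := by
  ext x y
  simp only [wedgeForm_apply, LinearMap.add_apply]
  ring

theorem eq_sum_smul_wedgeForm_coord {ι : Type*} [Fintype ι] [LinearOrder ι]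
    [LocallyFiniteOrderTop ι] [LocallyFiniteOrderBot ι] (e : Basis ι R M)
    {C : M →ₗ[R] M →ₗ[R] R} (hC : C.IsAlt) :
    C = ∑ i, ∑ j ∈ Finset.Ioi i, C (e i) (e j) • wedgeForm (e.coord i) (e.coord j) := by
  ext x y
  let term (j i : ι) : R := e.coord i x * e.coord j y * C (e i) (e j)
  have term_diag (i : ι) : term i i = 0 := by simp only [term, hC (e i), mul_zero]
  calc
    C x y = ∑ i, ∑ j, term j i := by
      rw [← LinearMap.sum_repr_mul_repr_mul e e x y]
      simp [Finsupp.sum_fintype, term, mul_assoc]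
    _ = ∑ i, ∑ j ∈ {i}ᶜ, term j i := by
      refine Finset.sum_congr rfl fun i _ => ?_
      rw [← Finset.sum_compl_add_sum {i}, Finset.sum_singleton, term_diag, add_zero]
    _ = ∑ i, ∑ j ∈ Finset.Ioi i, (term j i + term i j) :=
      (Finset.sum_sum_Ioi_add_eq_sum_sum_off_diag term).symm
    _ = _ := by
      simp only [LinearMap.sum_apply, LinearMap.smul_apply, wedgeForm_apply, smul_eq_mul]
      refine Finset.sum_congr rfl fun i _ => Finset.sum_congr rfl fun j _ => ?_
      simp only [term, ← hC.neg (e i) (e j)]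
      ring

end Wedge

section DerivedForms

variable {K V : Type*} [Field K] [AddCommGroup V] [Module K V] {B : V →ₗ[K] V →ₗ[K] K}

/-- The image of the derived subalgebra `sAdjDerived B` under `A ↦ b_A`, where the form
`b_A (u, v) = B (A u) v` is encoded as the composite `B ∘ₗ A`. -/
def derivedForms (B : V →ₗ[K] V →ₗ[K] K) : Submodule K (V →ₗ[K] V →ₗ[K] K) :=
  (sAdjDerived B).map (LinearMap.compRight K B)

theorem mem_derivedForms {C : V →ₗ[K] V →ₗ[K] K} :
    C ∈ derivedForms B ↔ ∃ A ∈ sAdjDerived B, ∀ u v : V, C u v = B (A u) v := by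
  simp [derivedForms, LinearMap.ext_iff₂, eq_comm]

theorem apply_commutator_self (hB : B.IsSymm) {A₁ A₂ : End K V} (h₁ : A₁ ∈ sAdj B)
    (h₂ : A₂ ∈ sAdj B) (v : V) : B ((A₁ * A₂ - A₂ * A₁) v) v = 0 :=
  calc
    B ((A₁ * A₂ - A₂ * A₁) v) v = B (A₁ (A₂ v)) v - B (A₂ (A₁ v)) v := by simp
    _ = B (A₂ v) (A₁ v) - B (A₁ v) (A₂ v) := by rw [h₁ (A₂ v) v, h₂ (A₁ v) v]
    _ = 0 := sub_eq_zero.mpr (hB.eq _ _)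

theorem isAlt_of_mem_derivedForms (hB : B.IsSymm) {C : V →ₗ[K] V →ₗ[K] K}
    (hC : C ∈ derivedForms B) : C.IsAlt := by
  obtain ⟨A, hA, rfl⟩ := hC
  intro v
  change B (A v) v = 0
  induction hA using Submodule.span_induction with
  | mem _ hx =>
    obtain ⟨A₁, h₁, A₂, h₂, rfl⟩ := hx
    exact apply_commutator_self hB h₁ h₂ v
  | zero => simp
  | add _ _ _ _ hx hy => simp [hx, hy]
  | smul _ _ _ hx => simp [hx]

theorem smulRight_self_mem_sAdj (hB : B.IsSymm) (u : V) : (B u).smulRight u ∈ sAdj B := by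
  intro x y
  have hxu : B x u = B u x := hB.eq x u
  simp [hxu, mul_comm]

theorem comp_commutator_smulRight_self (hB : B.IsSymm) (u v : V) :
    B ∘ₗ ((B v).smulRight v * (B u).smulRight u - (B u).smulRight u * (B v).smulRight v) =
      B u v • wedgeForm (B u) (B v) := by
  have hvu : B v u = B u v := hB.eq v u
  ext x y
  simp only [LinearMap.comp_apply, LinearMap.sub_apply, End.mul_apply, LinearMap.smulRight_apply,
    map_sub, map_smul, LinearMap.smul_apply, wedgeForm_apply, smul_eq_mul, hvu]
  ring

theorem wedgeForm_mem_derivedForms_of_apply_ne_zero (hB : B.IsSymm) {u v : V}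
    (huv : B u v ≠ 0) : wedgeForm (B u) (B v) ∈ derivedForms B := by
  rw [← Submodule.smul_mem_iff _ huv, ← comp_commutator_smulRight_self hB]
  exact Submodule.mem_map_of_mem <| Submodule.subset_span
    ⟨_, smulRight_self_mem_sAdj hB v, _, smulRight_self_mem_sAdj hB u, rfl⟩

theorem wedgeForm_mem_derivedForms (hB : B.IsSymm) (u v : V) :
    wedgeForm (B u) (B v) ∈ derivedForms B := by
  by_cases huv : B u v = 0
  · by_cases hu : B u = 0
    · simp [hu, wedgeForm_zero_left]
    · obtain ⟨w, hw⟩ : ∃ w, B u w ≠ 0 := DFunLike.ne_iff.mp hu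
      have huvw : B u (v - w) ≠ 0 := by simpa [huv] using hw
      have hsplit : wedgeForm (B u) (B v) =
          wedgeForm (B u) (B (v - w)) + wedgeForm (B u) (B w) := by
        rw [← wedgeForm_add_right, ← map_add, sub_add_cancel]
      rw [hsplit]
      exact Submodule.add_mem _ (wedgeForm_mem_derivedForms_of_apply_ne_zero hB huvw)
        (wedgeForm_mem_derivedForms_of_apply_ne_zero hB hw)
  · exact wedgeForm_mem_derivedForms_of_apply_ne_zero hB huv

variable [FiniteDimensional K V]

theorem surjective_of_separatingLeft (hB : B.SeparatingLeft) : Function.Surjective B := by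
  have hinj : Function.Injective B :=
    LinearMap.ker_eq_bot.mp (LinearMap.separatingLeft_iff_ker_eq_bot.mp hB)
  exact (LinearMap.injective_iff_surjective_of_finrank_eq_finrank
    Subspace.dual_finrank_eq.symm).mp hinj

theorem mem_derivedForms_of_isAlt (hB : B.IsSymm) (hsep : B.SeparatingLeft)
    {C : V →ₗ[K] V →ₗ[K] K} (hC : C.IsAlt) : C ∈ derivedForms B := by
  let e := finBasis K V
  rw [eq_sum_smul_wedgeForm_coord e hC]
  refine Submodule.sum_mem _ fun i _ => Submodule.sum_mem _ fun j _ => Submodule.smul_mem _ _ ?_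
  obtain ⟨u, hu⟩ := surjective_of_separatingLeft hsep (e.coord i)
  obtain ⟨v, hv⟩ := surjective_of_separatingLeft hsep (e.coord j)
  rw [← hu, ← hv]
  exact wedgeForm_mem_derivedForms hB u v

theorem statement13_general (hB : B.IsSymm) (hsep : B.SeparatingLeft)
    (C : V →ₗ[K] V →ₗ[K] K) :
    (∃ A ∈ sAdjDerived B, ∀ u v : V, C u v = B (A u) v) ↔ C.IsAlt := by
  rw [← mem_derivedForms]
  exact ⟨isAlt_of_mem_derivedForms hB, mem_derivedForms_of_isAlt hB hsep⟩

end DerivedForms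

/-- under A ↦ b_A, b_A(u,v) = b(Au,v), the image of the derived
subalgebra s(V,b)⁽¹⁾ is exactly the space of all alternating bilinear forms. -/
theorem statement13 {K V : Type*} [Field K] [AddCommGroup V] [Module K V]
    [FiniteDimensional K V] [CharP K 2] [PerfectField K]
    (B : V →ₗ[K] V →ₗ[K] K)
    (hsymm : ∀ u v : V, B u v = B v u)
    (hnd : ∀ v : V, (∀ w : V, B v w = 0) → v = 0)
    (hna : ∃ v : V, B v v ≠ 0) :
    ∀ C : V →ₗ[K] V →ₗ[K] K,
      (∃ A ∈ sAdjDerived B, ∀ u v : V, C u v = B (A u) v) ↔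
        (∀ v : V, C v v = 0) :=
  statement13_general ⟨hsymm⟩ hnd
end

section
/- Let U be a nonzero proper subspace of V, let l = codim_V U, r = dim(U ∩ U^⊥), and let t = codim_G N_G(U) where G = s(V,b)^{(1)} is the derived subalgebra of s(V,b). Then t = l(n − l) − r(r − 1)/2 − r; equivalently, l + t − n = (l − 1)(n − l) − r(r + 1)/2. -/
open Module

/-- Endomorphisms of V leaving the subspace U stable. -/
def stab {K V : Type*} [Field K] [AddCommGroup V] [Module K V]
    (U : Submodule K V) : Submodule K (Module.End K V) where
  carrier := {A | ∀ u ∈ U, A u ∈ U}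
  add_mem' := by
    intro A C hA hC u hu
    simpa [LinearMap.add_apply] using U.add_mem (hA u hu) (hC u hu)
  zero_mem' := by
    intro u hu
    simp
  smul_mem' := by
    intro c A hA u hu
    simpa [LinearMap.smul_apply] using U.smul_mem c (hA u hu)

/-!
Put `W = U^⊥`. Since `U = W^⊥`, an endomorphism `A` stabilizes `U` exactly when the form
`(u, w) ↦ b(Au, w)` on `U × W` vanishes. As `A` runs through `G`, the form `(u, v) ↦ b(Au, v)` runs
through all alternating forms on `V`; already the commutators of the rank-one operators `b(x, ·)x`
provide these. The restrictions of these to `U × W` are exactly the forms that are alternating on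
`U ∩ W`, in other words the kernel of the surjection from bilinear forms on `U × W` to quadratic
forms on `U ∩ W`. Counting dimensions, `t = (n - l) l - r(r + 1)/2`.
-/

open LinearMap (BilinForm)
open LinearMap.BilinMap (toQuadraticMap_surjective)

section BilinearForms

variable {R M : Type*} [CommRing R] [AddCommGroup M] [Module R M]

theorem sum_sum_isAlt_smul_eq_zero {ι E : Type*} [Fintype ι] [AddCommGroup E] [Module R E]
    {F : BilinForm R M} (hF : F.IsAlt) (v : ι → M) {T : ι → ι → E}
    (hT : ∀ i j, T i j = T j i) : ∑ i, ∑ j, F (v i) (v j) • T i j = 0 := by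
  rw [← Fintype.sum_prod_type' fun i j => F (v i) (v j) • T i j]
  refine Finset.sum_involution (fun p _ => p.swap) ?_ ?_ (by simp) (by simp)
  · rintro ⟨i, j⟩ -
    rw [Prod.swap, hT j i, ← add_smul, ← hF.neg_eq (v i) (v j), add_neg_cancel, zero_smul]
  · rintro ⟨i, j⟩ - hne hswap
    obtain rfl : j = i := congrArg Prod.fst hswap
    exact hne (by rw [hF.self_eq_zero, zero_smul])

theorem toBilin_toQuadraticMap_of_upperTriangular {ι : Type*} [LinearOrder ι] (e : Basis ι R M)
    {F : BilinForm R M} (hF : ∀ i j, j < i → F (e i) (e j) = 0) :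
    (LinearMap.BilinMap.toQuadraticMap F).toBilin e = F := by
  refine e.ext fun i => e.ext fun j => ?_
  rw [QuadraticMap.toBilin_apply, LinearMap.BilinMap.polar_toQuadraticMap]
  obtain hij | rfl | hji := lt_trichotomy i j
  · rw [if_neg hij.ne, if_pos hij, hF j i hij, add_zero]
  · rw [if_pos rfl, LinearMap.BilinMap.toQuadraticMap_apply]
  · rw [if_neg hji.ne', if_neg hji.not_gt, hF i j hji]

/-- The entries on and above the diagonal of the upper triangular Gram matrix of a quadratic form
in an ordered basis. Unlike the symmetric Gram matrix, they determine the form in characteristic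
two as well. -/
noncomputable def upperGramEntries {ι : Type*} [LinearOrder ι] (e : Basis ι R M) :
    QuadraticForm R M →ₗ[R] ({p : ι × ι // p.1 ≤ p.2} → R) where
  toFun Q p := Q.toBilin e (e p.1.1) (e p.1.2)
  map_add' Q Q' := by ext; simp
  map_smul' c Q := by ext; simp

theorem upperGramEntries_bijective {ι : Type*} [LinearOrder ι] (e : Basis ι R M) :
    Function.Bijective (upperGramEntries e) := by
  constructor
  · intro Q Q' hQ
    rw [← Q.toQuadraticMap_toBilin e, ← Q'.toQuadraticMap_toBilin e]
    congr 1
    refine e.ext fun i => e.ext fun j => ?_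
    obtain hij | hji := le_or_gt i j
    · exact congrFun hQ ⟨(i, j), hij⟩
    · simp only [QuadraticMap.toBilin_apply, hji.ne', hji.not_gt, if_false]
  · intro c
    let F : BilinForm R M :=
      e.constr R fun i => e.constr R fun j => if h : i ≤ j then c ⟨(i, j), h⟩ else 0
    have hF (i j : ι) : F (e i) (e j) = if h : i ≤ j then c ⟨(i, j), h⟩ else 0 := by
      simp only [F, Basis.constr_basis]
    have hF_upper : ∀ i j, j < i → F (e i) (e j) = 0 := fun i j hji => by
      rw [hF, dif_neg hji.not_ge]
    refine ⟨LinearMap.BilinMap.toQuadraticMap F, funext fun ⟨(i, j), hij⟩ => ?_⟩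
    change (LinearMap.BilinMap.toQuadraticMap F).toBilin e (e i) (e j) = _
    rw [toBilin_toQuadraticMap_of_upperTriangular e hF_upper, hF, dif_pos hij]

theorem finrank_quadraticForm [StrongRankCondition R] [Module.Free R M] [Module.Finite R M] :
    finrank R (QuadraticForm R M) = (finrank R M + 1).choose 2 := by
  let e := Module.finBasis R M
  rw [(LinearEquiv.ofBijective (upperGramEntries e) (upperGramEntries_bijective e)).finrank_eq,
    finrank_fintype_fun_eq_card, ← Fintype.card_congr Sym2.sortEquiv, Sym2.card, Fintype.card_fin]

/-- The map sending a bilinear form `φ` on `U × W` to the quadratic form `x ↦ φ x x` on `U ⊓ W`. -/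
def infQuadraticForm (U W : Submodule R M) :
    (U →ₗ[R] W →ₗ[R] R) →ₗ[R] QuadraticForm R ↥(U ⊓ W) where
  toFun φ := LinearMap.BilinMap.toQuadraticMap
    (φ.compl₁₂ (Submodule.inclusion inf_le_left) (Submodule.inclusion inf_le_right))
  map_add' φ φ' := by ext; simp
  map_smul' c φ := by ext; simp

theorem mem_ker_infQuadraticForm {U W : Submodule R M} {φ : U →ₗ[R] W →ₗ[R] R} :
    φ ∈ LinearMap.ker (infQuadraticForm U W) ↔
      ∀ x (hU : x ∈ U) (hW : x ∈ W), φ ⟨x, hU⟩ ⟨x, hW⟩ = 0 :=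
  ⟨fun h x hU hW => DFunLike.congr_fun h ⟨x, hU, hW⟩,
    fun h => QuadraticMap.ext fun x => h x x.2.1 x.2.2⟩

end BilinearForms

section Extension

variable {K V : Type*} [Field K] [AddCommGroup V] [Module K V]

theorem compl₁₂_surjective {M M' N N' P : Type*} [AddCommGroup M] [Module K M] [AddCommGroup M']
    [Module K M'] [AddCommGroup N] [Module K N] [AddCommGroup N'] [Module K N'] [AddCommGroup P]
    [Module K P] {f : M' →ₗ[K] M} {g : N' →ₗ[K] N} (hf : Function.Injective f)
    (hg : Function.Injective g) :
    Function.Surjective fun φ : M →ₗ[K] N →ₗ[K] P => φ.compl₁₂ f g := by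
  obtain ⟨f', hf'⟩ := f.exists_leftInverse_of_injective (LinearMap.ker_eq_bot.2 hf)
  obtain ⟨g', hg'⟩ := g.exists_leftInverse_of_injective (LinearMap.ker_eq_bot.2 hg)
  refine fun φ => ⟨φ.compl₁₂ f' g', LinearMap.ext₂ fun x y => ?_⟩
  exact congrArg₂ (φ · ·) (LinearMap.congr_fun hf' x) (LinearMap.congr_fun hg' y)

theorem infQuadraticForm_surjective (U W : Submodule K V) :
    Function.Surjective (infQuadraticForm U W) :=
  toQuadraticMap_surjective.comp
    (compl₁₂_surjective (Submodule.inclusion_injective _) (Submodule.inclusion_injective _))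

theorem finrank_ker_infQuadraticForm_add_choose [FiniteDimensional K V] (U W : Submodule K V) :
    finrank K (LinearMap.ker (infQuadraticForm U W)) + (finrank K ↥(U ⊓ W) + 1).choose 2 =
      finrank K U * finrank K W := by
  have hrank := LinearMap.finrank_range_add_finrank_ker (K := K)
    (V := U →ₗ[K] W →ₗ[K] K) (V₂ := QuadraticForm K ↥(U ⊓ W)) (infQuadraticForm U W)
  rwa [LinearMap.range_eq_top.2 (infQuadraticForm_surjective U W), finrank_top,
    finrank_quadraticForm, finrank_linearMap, finrank_linearMap_self, add_comm] at hrank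

theorem exists_linearMap_eqOn_eqOn {F : Type*} [AddCommGroup F] [Module K F] {U W : Submodule K V}
    {f g : V →ₗ[K] F} (hfg : Set.EqOn f g (U ⊓ W : Submodule K V)) :
    ∃ h : V →ₗ[K] F, Set.EqOn h f U ∧ Set.EqOn h g W := by
  have hagree (x : U) (y : W) (hxy : (x : V) = y) : f.toPMap U x = g.toPMap W y := by
    simpa [← hxy] using hfg ⟨x.2, hxy ▸ y.2⟩
  obtain ⟨h, hh⟩ := ((f.toPMap U).sup (g.toPMap W) hagree).toFun.exists_extend
  refine ⟨h, fun x hx => ?_, fun y hy => ?_⟩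
  · obtain ⟨hle, hval⟩ := LinearPMap.left_le_sup (f.toPMap U) (g.toPMap W) hagree
    exact (LinearMap.congr_fun hh ⟨x, hle hx⟩).trans (hval (x := ⟨x, hx⟩) rfl).symm
  · obtain ⟨hle, hval⟩ := LinearPMap.right_le_sup (f.toPMap U) (g.toPMap W) hagree
    exact (LinearMap.congr_fun hh ⟨y, hle hy⟩).trans (hval (x := ⟨y, hy⟩) rfl).symm

theorem exists_isAlt_eq_on_prod {U W : Submodule K V} {Φ : BilinForm K V}
    (hΦ : ∀ x ∈ U ⊓ W, Φ x x = 0) :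
    ∃ ψ : BilinForm K V, ψ.IsAlt ∧ ∀ u ∈ U, ∀ w ∈ W, ψ u w = Φ u w := by
  obtain ⟨π₀, hπ₀⟩ := LinearMap.exists_leftInverse_of_injective (U ⊓ W).subtype (U ⊓ W).ker_subtype
  let π := (U ⊓ W).subtype ∘ₗ π₀
  have hπ_mem (x : V) : π x ∈ U ⊓ W := (π₀ x).2
  have hπ_eq : Set.EqOn π (LinearMap.id : V →ₗ[K] V) (U ⊓ W : Submodule K V) := fun x hx =>
    congrArg Subtype.val (LinearMap.congr_fun hπ₀ ⟨x, hx⟩)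
  obtain ⟨p, hpU, hpW⟩ := exists_linearMap_eqOn_eqOn hπ_eq.symm
  obtain ⟨q, hqU, hqW⟩ := exists_linearMap_eqOn_eqOn hπ_eq
  have hπ_alt : (Φ.compl₁₂ π π).IsAlt := fun x => hΦ _ (hπ_mem x)
  -- On `U × W` the flipped term is `Φ (π w) (π u)`, which the last term cancels.
  refine ⟨Φ.compl₁₂ p q - (Φ.compl₁₂ p q).flip - Φ.compl₁₂ π π, fun x => ?_, fun u hu w hw => ?_⟩
  · simpa using hπ_alt x
  · have hskew : -Φ (π u) (π w) = Φ (π w) (π u) := hπ_alt.neg u w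
    simp only [LinearMap.sub_apply, LinearMap.flip_apply, LinearMap.compl₁₂_apply, hpU hu, hpW hw,
      hqU hu, hqW hw, LinearMap.id_apply, ← hskew]
    ring

end Extension

section DerivedAlgebra

variable {K V : Type*} [Field K] [AddCommGroup V] [Module K V] (B : BilinForm K V)

/-- The operator `u ↦ B x u • y` of rank at most one, as a bilinear function of `x` and `y`. -/
def rankOne : V →ₗ[K] V →ₗ[K] Module.End K V :=
  LinearMap.smulRightₗ ∘ₗ B

variable {B}

theorem rankOne_apply (x y u : V) : rankOne B x y u = B x u • y := rfl

theorem rankOne_mul_rankOne (x y z w : V) :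
    rankOne B x y * rankOne B z w = B x w • rankOne B z y := by
  ext u
  simp only [Module.End.mul_apply, LinearMap.smul_apply, rankOne_apply, map_smul]
  exact smul_comm _ _ _

theorem rankOne_self_mem_sAdj (hs : B.IsSymm) (x : V) : rankOne B x x ∈ sAdj B := fun u v => by
  simp only [rankOne_apply, map_smul, LinearMap.smul_apply, smul_eq_mul, hs.eq u x, mul_comm]

theorem rankOne_sub_rankOne_mem_sAdjDerived_of_ne_zero (hs : B.IsSymm) {x y : V}
    (hxy : B x y ≠ 0) : rankOne B x y - rankOne B y x ∈ sAdjDerived B := by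
  have hcomm : rankOne B y y * rankOne B x x - rankOne B x x * rankOne B y y =
      B x y • (rankOne B x y - rankOne B y x) := by
    rw [rankOne_mul_rankOne, rankOne_mul_rankOne, hs.eq y x, smul_sub]
  rw [← (sAdjDerived B).smul_mem_iff hxy, ← hcomm]
  exact Submodule.subset_span
    ⟨_, rankOne_self_mem_sAdj hs y, _, rankOne_self_mem_sAdj hs x, rfl⟩

theorem rankOne_sub_rankOne_mem_sAdjDerived (hs : B.IsSymm) (hB : B.Nondegenerate) (x y : V) :
    rankOne B x y - rankOne B y x ∈ sAdjDerived B := by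
  by_cases hxy : B x y = 0
  · obtain rfl | hx := eq_or_ne x 0
    · simp
    -- Write `y = (y + z) - z` with both `B x (y + z)` and `B x z` nonzero.
    obtain ⟨z, hz⟩ : ∃ z, B x z ≠ 0 := not_forall.1 fun h => hx (hB.1 x h)
    have hyz : B x (y + z) ≠ 0 := by rwa [map_add, hxy, zero_add]
    convert (sAdjDerived B).sub_mem
      (rankOne_sub_rankOne_mem_sAdjDerived_of_ne_zero hs hyz)
      (rankOne_sub_rankOne_mem_sAdjDerived_of_ne_zero hs hz) using 1
    simp only [map_add, LinearMap.add_apply]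
    abel
  · exact rankOne_sub_rankOne_mem_sAdjDerived_of_ne_zero hs hxy

theorem isAlt_comp_of_mem_sAdjDerived (hs : B.IsSymm) {A : Module.End K V}
    (hA : A ∈ sAdjDerived B) : LinearMap.IsAlt (B ∘ₗ A) := by
  intro u
  induction hA using Submodule.span_induction with
  | mem C hC =>
    obtain ⟨A₁, h₁, A₂, h₂, rfl⟩ := hC
    have hswap : B (A₁ (A₂ u)) u = B (A₂ (A₁ u)) u := by rw [h₁, h₂, hs.eq]
    simp [hswap]
  | zero => simp
  | add A A' _ _ hA hA' => simp_all
  | smul c A _ hA => simp_all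

theorem sum_sum_smul_rankOne_dualBasis {ι : Type*} [Fintype ι] [DecidableEq ι]
    (hB : B.Nondegenerate) (e : Basis ι K V) (A : Module.End K V) :
    ∑ i, ∑ j, B (A (e i)) (e j) • rankOne B (B.dualBasis hB e i) (B.dualBasis hB e j) = A := by
  have hexpand (v : V) : ∑ j, B v (e j) • B.dualBasis hB e j = v := by
    simp_rw [← BilinForm.dualBasis_repr_apply hB]
    exact (B.dualBasis hB e).sum_repr v
  refine e.ext fun k => ?_
  simp [LinearMap.sum_apply, rankOne_apply, BilinForm.apply_dualBasis_left, hexpand]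

theorem mem_sAdjDerived_iff [FiniteDimensional K V] (hs : B.IsSymm) (hB : B.Nondegenerate)
    {A : Module.End K V} : A ∈ sAdjDerived B ↔ LinearMap.IsAlt (B ∘ₗ A) := by
  refine ⟨isAlt_comp_of_mem_sAdjDerived hs, fun hA => ?_⟩
  let e := Module.finBasis K V
  let T i j := (sAdjDerived B).mkQ (rankOne B (B.dualBasis hB e i) (B.dualBasis hB e j))
  have hT i j : T i j = T j i :=
    (Submodule.Quotient.eq _).2 (rankOne_sub_rankOne_mem_sAdjDerived hs hB _ _)
  rw [← Submodule.Quotient.mk_eq_zero, ← Submodule.mkQ_apply,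
    ← sum_sum_smul_rankOne_dualBasis hB e A]
  simp only [map_sum, map_smul]
  exact sum_sum_isAlt_smul_eq_zero hA e hT

end DerivedAlgebra

section Stabilizer

variable {K V : Type*} [Field K] [AddCommGroup V] [Module K V]

/-- The map sending an endomorphism `A` to the form `(u, w) ↦ B (A u) w` on `U × W`. -/
def restrictedForm (B : BilinForm K V) (U W : Submodule K V) :
    Module.End K V →ₗ[K] U →ₗ[K] W →ₗ[K] K where
  toFun A := LinearMap.domRestrict₁₂ (B ∘ₗ A) U W
  map_add' A A' := LinearMap.ext₂ fun u w => LinearMap.map_add₂ B (A u) (A' u) w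
  map_smul' c A := LinearMap.ext₂ fun u w => LinearMap.map_smul₂ B c (A u) w

variable {B : BilinForm K V}

theorem perp_eq_orthogonal (hs : B.IsSymm) (L : Submodule K V) : perp B L = B.orthogonal L := by
  ext v
  exact forall₂_congr fun w _ => by rw [hs.eq]

variable [FiniteDimensional K V]

theorem ker_restrictedForm_perp (hs : B.IsSymm) (hB : B.Nondegenerate) (U : Submodule K V) :
    LinearMap.ker (restrictedForm B U (perp B U)) = stab U := by
  have hperp_perp : perp B (perp B U) = U := by
    simp only [perp_eq_orthogonal hs, BilinForm.orthogonal_orthogonal hB hs.isRefl]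
  ext A
  constructor
  · intro hA u hu
    rw [← hperp_perp]
    exact fun w hw => LinearMap.congr_fun₂ hA ⟨u, hu⟩ ⟨w, hw⟩
  · intro hA
    refine LinearMap.ext₂ fun u w => ?_
    exact (hs.eq _ _).trans (w.2 _ (hA u u.2))

theorem map_restrictedForm_sAdjDerived (hs : B.IsSymm) (hB : B.Nondegenerate)
    (U W : Submodule K V) :
    (sAdjDerived B).map (restrictedForm B U W) = LinearMap.ker (infQuadraticForm U W) := by
  ext φ
  rw [mem_ker_infQuadraticForm]
  constructor
  · rintro ⟨A, hA, rfl⟩ x - -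
    exact isAlt_comp_of_mem_sAdjDerived hs hA x
  · intro hφ
    obtain ⟨Φ, rfl⟩ := compl₁₂_surjective U.subtype_injective W.subtype_injective φ
    obtain ⟨ψ, hψ, hψΦ⟩ := exists_isAlt_eq_on_prod fun x hx => hφ x hx.1 hx.2
    let A := ψ.symmCompOfNondegenerate B hB
    have hA : B ∘ₗ A = ψ := LinearMap.ext fun v => ψ.comp_symmCompOfNondegenerate_apply hB v
    refine ⟨A, (mem_sAdjDerived_iff hs hB).2 (hA ▸ hψ), LinearMap.ext₂ fun u w => ?_⟩
    exact (LinearMap.congr_fun₂ hA u w).trans (hψΦ u u.2 w w.2)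

theorem finrank_map_add_finrank_inf_ker_s15 {F : Type*} [AddCommGroup F] [Module K F]
    (P : Submodule K V) (f : V →ₗ[K] F) :
    finrank K (P.map f) + finrank K ↥(P ⊓ LinearMap.ker f) = finrank K P := by
  rw [← (f.domRestrict P).finrank_range_add_finrank_ker, LinearMap.range_domRestrict,
    LinearMap.ker_domRestrict, ← Submodule.map_comap_subtype, Submodule.finrank_map_subtype_eq]

theorem finrank_sAdjDerived_add_choose (hs : B.IsSymm) (hB : B.Nondegenerate)
    (U : Submodule K V) :
    finrank K (sAdjDerived B) + (finrank K ↥(U ⊓ perp B U) + 1).choose 2 =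
      finrank K ↥(sAdjDerived B ⊓ stab U) + (finrank K V - finrank K U) * finrank K U := by
  have hrank := finrank_map_add_finrank_inf_ker_s15 (F := U →ₗ[K] perp B U →ₗ[K] K) (sAdjDerived B)
    (restrictedForm B U (perp B U))
  rw [map_restrictedForm_sAdjDerived hs hB, ker_restrictedForm_perp hs hB] at hrank
  have hker := finrank_ker_infQuadraticForm_add_choose U (perp B U)
  have hperp : finrank K (perp B U) = finrank K V - finrank K U := by
    rw [perp_eq_orthogonal hs, BilinForm.finrank_orthogonal hB]
  rw [hperp, mul_comm] at hker
  omega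

end Stabilizer

theorem statement15_general {K V : Type*} [Field K] [AddCommGroup V] [Module K V]
    [FiniteDimensional K V]
    (B : V →ₗ[K] V →ₗ[K] K)
    (hsymm : ∀ u v : V, B u v = B v u)
    (hnd : ∀ v : V, (∀ w : V, B v w = 0) → v = 0)
    (U : Submodule K V)
    (n l r t : ℕ)
    (hn : n = finrank K V)
    (hl : l = finrank K V - finrank K ↥U)
    (hr : r = finrank K ↥(U ⊓ perp B U))
    (ht : t = finrank K ↥(sAdjDerived B)
            - finrank K ↥(sAdjDerived B ⊓ stab U)) :
    t = l * (n - l) - r * (r - 1) / 2 - r := by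
  have hs : BilinForm.IsSymm B := ⟨hsymm⟩
  have hB : BilinForm.Nondegenerate B :=
    (LinearMap.IsRefl.nondegenerate_iff_separatingLeft hs.isRefl).2 hnd
  have hcount := finrank_sAdjDerived_add_choose hs hB U
  have hU : finrank K U = n - l := by have := U.finrank_le; omega
  have hle := Submodule.finrank_mono (inf_le_left : sAdjDerived B ⊓ stab U ≤ sAdjDerived B)
  rw [← hl, ← hr, hU, Nat.choose_succ_succ' r 1, Nat.choose_one_right,
    Nat.choose_two_right] at hcount
  omega

/-- for a nonzero proper subspace U of V, with G = s(V,b)⁽¹⁾,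
l = codim U, r = dim(U ∩ U^⊥), n = dim V and t = codim of N_G(U) in G,
t = l(n − l) − r(r − 1)/2 − r. -/
theorem statement15 {K V : Type*} [Field K] [AddCommGroup V] [Module K V]
    [FiniteDimensional K V] [CharP K 2] [PerfectField K]
    (B : V →ₗ[K] V →ₗ[K] K)
    (hsymm : ∀ u v : V, B u v = B v u)
    (hnd : ∀ v : V, (∀ w : V, B v w = 0) → v = 0)
    (hna : ∃ v : V, B v v ≠ 0)
    (U : Submodule K V) (hUbot : U ≠ ⊥) (hUtop : U ≠ ⊤)
    (n l r t : ℕ)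
    (hn : n = finrank K V)
    (hl : l = finrank K V - finrank K ↥U)
    (hr : r = finrank K ↥(U ⊓ perp B U))
    (ht : t = finrank K ↥(sAdjDerived B)
            - finrank K ↥(sAdjDerived B ⊓ stab U)) :
    t = l * (n - l) - r * (r - 1) / 2 - r :=
  statement15_general B hsymm hnd U n l r t hn hl hr ht
end
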